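/- arXiv:2203.00816 — 2 statements merged into one kernel-verified Lean document; each statement's English description precedes it below -/
import Mathlib

section
/- Let n ≡ 1 (mod 8) with n ≥ 17. Then there exists a set of (n−1)/2 mutually orthogonal cyclic 4-cycle systems of the complete graph K_n; in particular, μ'(4,n) ≥ (n−1)/2. -/
/-- The edge set of the closed walk through `f 0, f 1, …, f (ℓ-1), f 0`. -/
def cycleEdges {V : Type*} [DecidableEq V] (ℓ : ℕ) (f : Fin ℓ → V) : Finset (Sym2 V) :=
  Finset.univ.image (fun i : Fin ℓ => s(f i, f ⟨(i.val + 1) % ℓ, Nat.mod_lt _ i.pos⟩))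

/-- `E` is the edge set of an `ℓ`-cycle. -/
def IsCycle {V : Type*} [DecidableEq V] (ℓ : ℕ) (E : Finset (Sym2 V)) : Prop :=
  ∃ f : Fin ℓ → V, Function.Injective f ∧ E = cycleEdges ℓ f

/-- `F` is an `ℓ`-cycle system of the complete graph on `V`: a set of `ℓ`-cycles whose
edge sets partition the edge set of the complete graph. -/
def IsCycleSystem {V : Type*} [DecidableEq V] (ℓ : ℕ) (F : Set (Finset (Sym2 V))) : Prop :=
  (∀ E ∈ F, IsCycle ℓ E) ∧
  F.Pairwise (fun E E' => Disjoint E E') ∧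
  (∀ e : Sym2 V, ¬ e.IsDiag ↔ ∃ E ∈ F, e ∈ E)

/-- Two cycle systems are orthogonal when any two cycles, one from each,
share at most one edge. -/
def Orthog {V : Type*} [DecidableEq V] (F F' : Set (Finset (Sym2 V))) : Prop :=
  ∀ E ∈ F, ∀ E' ∈ F', (E ∩ E').card ≤ 1

/-- Translation of a cycle (given by its edge set) by `g ∈ ZMod n`. -/
def translateCycle {n : ℕ} (g : ZMod n) (E : Finset (Sym2 (ZMod n))) : Finset (Sym2 (ZMod n)) :=
  E.image (Sym2.map (· + g))

/-- A cycle system of the complete graph on `ZMod n` is cyclic if closed under translation. -/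
def IsCyclicSystem {n : ℕ} (F : Set (Finset (Sym2 (ZMod n)))) : Prop :=
  ∀ E ∈ F, ∀ g : ZMod n, translateCycle g E ∈ F

/-!
Orient the edges of a cyclic system and record, for each signed difference `d`, the difference
`f d` that follows it on its cycle; by cyclicity `f` determines the whole system. That `f` comes
from a 4-cycle system, and that two such systems are orthogonal, are conditions on
the action of these maps on a single difference.

For `n = 8k + 1` write the differences as `±a`, `±(a + 1)` with `a ∈ {1, 3, …, 4k - 1}`. A perfect
matching of these `2k` odd numbers gives a system, whose cycles have differences
`a, b + 1, -(a + 1), -b` for the matched pairs `{a, b}`; disjoint matchings give orthogonal systems,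
and so does negating all differences. A one-factorization of `K_{2k}` has `2k - 1` matchings, one
short of the `2k` needed. So the matching `{4q + 1, 4q + 3}` is given up and replaced by two other
systems, with differences `a, -(a + 1), -(a + 2), a + 3` and `a, -(a + 2), b + 3, -(b + 1)`, where
`a, b ≡ 1 (mod 4)` and `b` follows `a` cyclically.
-/

section FourCycle

variable {V : Type*} [DecidableEq V] {x y z w z' w' : V}

/-- The edge set of the closed walk `x, y, z, w, x`. -/
def fourCycle (x y z w : V) : Finset (Sym2 V) :=
  {s(x, y), s(y, z), s(z, w), s(w, x)}

theorem fourCycle_rotate (x y z w : V) : fourCycle y z w x = fourCycle x y z w := by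
  ext e
  simp only [fourCycle, Finset.mem_insert, Finset.mem_singleton]
  tauto

theorem fourCycle_reverse (x y z w : V) : fourCycle y x w z = fourCycle x y z w := by
  ext e
  simp only [fourCycle, Finset.mem_insert, Finset.mem_singleton, Sym2.eq_swap (a := y) (b := x),
    Sym2.eq_swap (a := x) (b := w), Sym2.eq_swap (a := w) (b := z), Sym2.eq_swap (a := z) (b := y)]
  tauto

theorem cycleEdges_four (x y z w : V) : cycleEdges 4 ![x, y, z, w] = fourCycle x y z w := by
  ext e
  simp only [cycleEdges, fourCycle, Finset.mem_image, Finset.mem_univ, true_and,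
    Fin.exists_fin_succ, Finset.mem_insert, Finset.mem_singleton, eq_comm (a := e)]
  simp

theorem isCycle_fourCycle (h : [x, y, z, w].Nodup) : IsCycle 4 (fourCycle x y z w) :=
  ⟨![x, y, z, w], by
    simpa [List.ofFn_succ] using List.nodup_ofFn (f := ![x, y, z, w]) |>.1 (by simpa using h),
    (cycleEdges_four x y z w).symm⟩

theorem card_fourCycle_inter_le_one (h : [x, y, z, w].Nodup) (h' : [x, y, z', w'].Nodup)
    (hz : z ≠ z') (hw : w ≠ w') (hzw : ¬(z = w' ∧ w = z')) :
    (fourCycle x y z w ∩ fourCycle x y z' w').card ≤ 1 := by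
  suffices fourCycle x y z w ∩ fourCycle x y z' w' ⊆ {s(x, y)} from
    (Finset.card_le_card this).trans_eq (Finset.card_singleton _)
  intro e he
  simp only [List.nodup_cons, List.mem_cons, List.not_mem_nil, or_false, not_or] at h h'
  simp only [fourCycle, Finset.mem_inter, Finset.mem_insert, Finset.mem_singleton] at he ⊢
  grind [Sym2.eq_iff]

theorem one_lt_card_fourCycle (h : x ≠ z) : 1 < (fourCycle x y z w).card := by
  refine Finset.one_lt_card.2 ⟨s(x, y), by simp [fourCycle], s(y, z), by simp [fourCycle], ?_⟩
  grind [Sym2.eq_iff]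

end FourCycle

section DifferenceSystem

variable {D G : Type*} [InvolutiveNeg D] [AddCommGroup G]
  {δ : D → G} {f g : D → D}

/-- A labelling of the nonzero elements of `G`, seen as differences of the oriented edges of the
complete graph on `G`, by a type `D` on which reversal of edges acts as negation. -/
structure IsDifferenceLabelling (δ : D → G) : Prop where
  map_neg : ∀ d, δ (-d) = -δ d
  injective : Function.Injective δ
  range_eq : Set.range δ = {0}ᶜ

/-- `f` sends `d` to the difference that follows it on its cycle, for a system of 4-cycles closed
under translation and reversal, all differences being labelled by `δ`. -/
structure IsSuccessorRule (δ : D → G) (f : D → D) : Prop where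
  reverse : ∀ d, f (-f d) = -d
  iterate_four : ∀ d, f (f (f (f d))) = d
  sum_eq_zero : ∀ d, δ d + δ (f d) + δ (f (f d)) + δ (f (f (f d))) = 0
  ne_neg : ∀ d, f d ≠ -d

/-- The condition on successor rules that makes their cycle systems orthogonal: the cycles through
a common edge do not share an adjacent edge, nor the opposite edge in reverse. -/
def SuccessorOrthog (f g : D → D) : Prop :=
  ∀ d, f d ≠ g d ∧ f (f d) ≠ -g (g d)

theorem IsDifferenceLabelling.ne_zero (hδ : IsDifferenceLabelling δ) (d : D) : δ d ≠ 0 :=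
  hδ.range_eq.subset (Set.mem_range_self d)

theorem IsDifferenceLabelling.exists_eq_add (hδ : IsDifferenceLabelling δ) {y z : G}
    (h : y ≠ z) : ∃ d, z = y + δ d := by
  obtain ⟨d, hd⟩ : z - y ∈ Set.range δ := hδ.range_eq ▸ sub_ne_zero.2 h.symm
  exact ⟨d, by rw [hd, add_sub_cancel]⟩

theorem IsDifferenceLabelling.add_ne_zero (hδ : IsDifferenceLabelling δ) {c d : D}
    (h : d ≠ -c) : δ c + δ d ≠ 0 := fun h0 ↦
  h (hδ.injective (by rw [hδ.map_neg, eq_neg_of_add_eq_zero_right h0]))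

namespace IsSuccessorRule

theorem apply_neg (hf : IsSuccessorRule δ f) (d : D) : f (-d) = -f (f (f d)) := by
  simpa only [hf.iterate_four] using hf.reverse (f (f (f d)))

theorem sum_three (hf : IsSuccessorRule δ f) (d : D) :
    δ d + δ (f d) + δ (f (f d)) = -δ (f (f (f d))) :=
  eq_neg_of_add_eq_zero_left (hf.sum_eq_zero d)

theorem walk_closes (hf : IsSuccessorRule δ f) (x : G) (d : D) :
    x + δ d + δ (f d) + δ (f (f d)) + δ (f (f (f d))) = x := by
  simpa only [add_assoc, add_eq_left] using hf.sum_eq_zero d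

theorem nodup_vertices (hδ : IsDifferenceLabelling δ) (hf : IsSuccessorRule δ f) (x : G) (d : D) :
    [x, x + δ d, x + δ d + δ (f d), x + δ d + δ (f d) + δ (f (f d))].Nodup := by
  have h₁ := hδ.add_ne_zero (hf.ne_neg d)
  have h₂ := hδ.add_ne_zero (hf.ne_neg (f d))
  have h₃ : δ d + δ (f d) + δ (f (f d)) ≠ 0 := by
    rw [hf.sum_three]; exact neg_ne_zero.2 (hδ.ne_zero _)
  rw [add_assoc] at h₃
  simp [add_assoc, hδ.ne_zero, h₁, h₂, h₃]

end IsSuccessorRule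

variable [DecidableEq G]

/-- The 4-cycle that starts at `x` with difference `d` and continues by the rule `f`. -/
def successorCycle (δ : D → G) (f : D → D) (x : G) (d : D) : Finset (Sym2 G) :=
  fourCycle x (x + δ d) (x + δ d + δ (f d)) (x + δ d + δ (f d) + δ (f (f d)))

/-- The set of all cycles generated by the successor rule `f`. -/
def successorSystem (δ : D → G) (f : D → D) : Set (Finset (Sym2 G)) :=
  {E | ∃ x d, successorCycle δ f x d = E}

namespace IsSuccessorRule

theorem successorCycle_rotate (hf : IsSuccessorRule δ f) (x : G) (d : D) :
    successorCycle δ f (x + δ d) (f d) = successorCycle δ f x d := by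
  simp only [successorCycle, hf.walk_closes, fourCycle_rotate]

theorem successorCycle_reverse (hδ : IsDifferenceLabelling δ) (hf : IsSuccessorRule δ f) (x : G)
    (d : D) : successorCycle δ f (x + δ d) (-d) = successorCycle δ f x d := by
  have hlast : x + δ (f (-d)) = x + δ d + δ (f d) + δ (f (f d)) := by
    rw [hf.apply_neg, hδ.map_neg, ← hf.sum_three, ← add_assoc, ← add_assoc]
  have hsecond : x + δ d + δ (f d) + δ (f (f d)) + δ (f (f (-d))) = x + δ d + δ (f d) := by
    rw [hf.apply_neg, hf.reverse, hδ.map_neg, add_neg_cancel_right]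
  have hfirst : x + δ d + δ (-d) = x := by rw [hδ.map_neg, add_neg_cancel_right]
  simp only [successorCycle, hfirst, hlast, hsecond, fourCycle_reverse]

theorem exists_successorCycle_eq_of_mem (hδ : IsDifferenceLabelling δ) (hf : IsSuccessorRule δ f)
    {x y z : G} {d : D} (h : s(y, z) ∈ successorCycle δ f x d) :
    ∃ c, z = y + δ c ∧ successorCycle δ f y c = successorCycle δ f x d := by
  have of_first : ∀ {x d}, s(y, z) = s(x, x + δ d) →
      ∃ c, z = y + δ c ∧ successorCycle δ f y c = successorCycle δ f x d := by
    intro x d h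
    obtain ⟨rfl, rfl⟩ | ⟨rfl, rfl⟩ := Sym2.eq_iff.1 h
    · exact ⟨d, rfl, rfl⟩
    · exact ⟨-d, by rw [hδ.map_neg, add_neg_cancel_right], hf.successorCycle_reverse hδ _ d⟩
  simp only [successorCycle, fourCycle, Finset.mem_insert, Finset.mem_singleton] at h
  rcases h with h | h | h | h
  · exact of_first h
  · rw [← hf.successorCycle_rotate]
    exact of_first h
  · rw [← hf.successorCycle_rotate, ← hf.successorCycle_rotate]
    exact of_first h
  · rw [← hf.successorCycle_rotate, ← hf.successorCycle_rotate, ← hf.successorCycle_rotate]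
    exact of_first (h.trans (by rw [hf.walk_closes]))

theorem isCycleSystem (hδ : IsDifferenceLabelling δ) (hf : IsSuccessorRule δ f) :
    IsCycleSystem 4 (successorSystem δ f) := by
  refine ⟨?_, ?_, ?_⟩
  · rintro _ ⟨x, d, rfl⟩
    exact isCycle_fourCycle (hf.nodup_vertices hδ x d)
  · rintro _ ⟨x, d, rfl⟩ _ ⟨x', d', rfl⟩ hne
    refine Finset.disjoint_left.2 fun e he he' ↦ hne ?_
    induction e with | _ y z
    obtain ⟨c, rfl, hc⟩ := hf.exists_successorCycle_eq_of_mem hδ he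
    obtain ⟨c', hcc', hc'⟩ := hf.exists_successorCycle_eq_of_mem hδ he'
    obtain rfl : c = c' := hδ.injective (add_left_cancel hcc')
    exact hc.symm.trans hc'
  · intro e
    induction e with | _ y z
    rw [Sym2.mk_isDiag_iff]
    constructor
    · intro hyz
      obtain ⟨d, rfl⟩ := hδ.exists_eq_add hyz
      exact ⟨_, ⟨y, d, rfl⟩, by simp [successorCycle, fourCycle]⟩
    · rintro ⟨_, ⟨x, d, rfl⟩, h⟩ rfl
      obtain ⟨c, hc, -⟩ := hf.exists_successorCycle_eq_of_mem hδ h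
      exact hδ.ne_zero c (left_eq_add.1 hc)

theorem orthog (hδ : IsDifferenceLabelling δ) (hf : IsSuccessorRule δ f)
    (hg : IsSuccessorRule δ g) (hfg : SuccessorOrthog f g) :
    Orthog (successorSystem δ f) (successorSystem δ g) := by
  rintro _ ⟨x, d, rfl⟩ _ ⟨x', d', rfl⟩
  by_contra! hcard
  obtain ⟨e, he⟩ := Finset.card_pos.1 (zero_lt_one.trans hcard)
  obtain ⟨he, he'⟩ := Finset.mem_inter.1 he
  induction e with | _ y z
  obtain ⟨c, rfl, hc⟩ := hf.exists_successorCycle_eq_of_mem hδ he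
  obtain ⟨c', hcc', hc'⟩ := hg.exists_successorCycle_eq_of_mem hδ he'
  obtain rfl : c = c' := hδ.injective (add_left_cancel hcc')
  rw [← hc, ← hc'] at hcard
  refine hcard.not_ge (card_fourCycle_inter_le_one (hf.nodup_vertices hδ y c)
    (hg.nodup_vertices hδ y c) ?_ ?_ ?_)
  · exact fun h ↦ (hfg c).1 (hδ.injective (add_left_cancel h))
  · -- The third differences are the first ones of the reversed cycles.
    intro h
    simp only [add_assoc y, hf.sum_three, hg.sum_three, ← hδ.map_neg, ← hf.apply_neg,
      ← hg.apply_neg] at h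
    exact (hfg (-c)).1 (hδ.injective (add_left_cancel h))
  · rintro ⟨hz, hw⟩
    refine (hfg c).2 (hδ.injective ?_)
    rw [hz, add_assoc _ (δ (g (g c))), add_eq_left] at hw
    rw [hδ.map_neg, eq_neg_of_add_eq_zero_right hw]

end IsSuccessorRule

theorem not_orthog_successorSystem_self [Nonempty D] (hδ : IsDifferenceLabelling δ)
    (hf : IsSuccessorRule δ f) : ¬Orthog (successorSystem δ f) (successorSystem δ f) := by
  intro h
  obtain ⟨d⟩ := ‹Nonempty D›
  have hcard := h _ ⟨0, d, rfl⟩ _ ⟨0, d, rfl⟩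
  have hxz : (0 : G) ≠ 0 + δ d + δ (f d) := by
    simpa only [zero_add] using (hδ.add_ne_zero (hf.ne_neg d)).symm
  rw [Finset.inter_self] at hcard
  exact hcard.not_gt (one_lt_card_fourCycle hxz)

end DifferenceSystem

section Negation

variable {D G : Type*} [InvolutiveNeg D] [AddCommGroup G] {δ : D → G} {f g : D → D}

/-- The successor rule of the system obtained by negating all vertices. -/
def negConj (f : D → D) (d : D) : D :=
  -f (-d)

theorem negConj_negConj (f : D → D) : negConj (negConj f) = f := by
  funext d
  simp only [negConj, neg_neg]

theorem isSuccessorRule_negConj (hδ : IsDifferenceLabelling δ) (hf : IsSuccessorRule δ f) :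
    IsSuccessorRule δ (negConj f) where
  reverse d := by simp only [negConj, neg_neg, hf.reverse]
  iterate_four d := by simp only [negConj, neg_neg, hf.iterate_four]
  sum_eq_zero d := by
    have h := congrArg Neg.neg (hf.sum_eq_zero (-d))
    simpa only [negConj, neg_neg, hδ.map_neg, neg_add, neg_zero] using h
  ne_neg d := neg_injective.ne (by simpa only [neg_neg] using hf.ne_neg (-d))

theorem SuccessorOrthog.symm (h : SuccessorOrthog f g) : SuccessorOrthog g f :=
  fun d ↦ ⟨(h d).1.symm, fun hd ↦ (h d).2 (by rw [hd, neg_neg])⟩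

theorem successorOrthog_negConj (h : SuccessorOrthog f g) :
    SuccessorOrthog (negConj f) (negConj g) := fun d ↦
  ⟨neg_injective.ne (h (-d)).1, by
    simpa only [negConj, neg_neg] using neg_injective.ne (h (-d)).2⟩

/-- `f` is orthogonal to both `g` and its negation. -/
def SuccessorOrthogPM (f g : D → D) : Prop :=
  SuccessorOrthog f g ∧ SuccessorOrthog f (negConj g)

theorem SuccessorOrthogPM.symm (h : SuccessorOrthogPM f g) : SuccessorOrthogPM g f :=
  ⟨h.1.symm, by simpa only [negConj_negConj] using (successorOrthog_negConj h.2).symm⟩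

theorem pairwise_successorOrthog_negConj {ι : Type*} {f : ι → D → D}
    (hself : ∀ i, SuccessorOrthog (f i) (negConj (f i)))
    (hne : Pairwise fun i j ↦ SuccessorOrthogPM (f i) (f j)) :
    Pairwise fun a b : ι × Bool ↦
      SuccessorOrthog (bif a.2 then negConj (f a.1) else f a.1)
        (bif b.2 then negConj (f b.1) else f b.1) := by
  rintro ⟨i, s⟩ ⟨j, t⟩ h
  obtain rfl | hij := eq_or_ne i j
  · cases s <;> cases t
    · exact absurd rfl h
    · exact hself i
    · exact (hself i).symm
    · exact absurd rfl h
  · cases s <;> cases t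
    · exact (hne hij).1
    · exact (hne hij).2
    · exact (hne hij.symm).2.symm
    · exact successorOrthog_negConj (hne hij).1

end Negation

section Cyclic

variable {D : Type*} {n : ℕ}

theorem isCyclicSystem_successorSystem (δ : D → ZMod n) (f : D → D) :
    IsCyclicSystem (successorSystem δ f) := by
  rintro _ ⟨x, d, rfl⟩ g
  refine ⟨x + g, d, ?_⟩
  simp only [translateCycle, successorCycle, fourCycle, Finset.image_insert,
    Finset.image_singleton, Sym2.map_mk, add_right_comm _ _ g]

theorem exists_mutuallyOrthogonal_of_successorRules {ι : Type*} [Finite ι]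
    [InvolutiveNeg D] [Nonempty D] {δ : D → ZMod n} (hδ : IsDifferenceLabelling δ)
    {f : ι → D → D} (hf : ∀ i, IsSuccessorRule δ (f i))
    (hself : ∀ i, SuccessorOrthog (f i) (negConj (f i)))
    (hne : Pairwise fun i j ↦ SuccessorOrthogPM (f i) (f j)) :
    ∃ S : Set (Set (Finset (Sym2 (ZMod n)))),
      (∀ F ∈ S, IsCycleSystem 4 F ∧ IsCyclicSystem F) ∧ S.Pairwise Orthog ∧
      S.ncard = Nat.card ι * 2 := by
  let r (a : ι × Bool) : D → D := bif a.2 then negConj (f a.1) else f a.1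
  have hr : ∀ a, IsSuccessorRule δ (r a)
    | (i, false) => hf i
    | (i, true) => isSuccessorRule_negConj hδ (hf i)
  have horth : Pairwise fun a b ↦ Orthog (successorSystem δ (r a)) (successorSystem δ (r b)) :=
    (pairwise_successorOrthog_negConj hself hne).mono fun a b ↦ (hr a).orthog hδ (hr b)
  have hinj : Function.Injective fun a ↦ successorSystem δ (r a) := by
    intro a b (hab : successorSystem δ (r a) = successorSystem δ (r b))
    by_contra h
    have hb : Orthog (successorSystem δ (r a)) (successorSystem δ (r b)) := horth h
    exact not_orthog_successorSystem_self hδ (hr b) (hab ▸ hb)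
  refine ⟨Set.range fun a ↦ successorSystem δ (r a), ?_, horth.range_pairwise, ?_⟩
  · rintro _ ⟨a, rfl⟩
    exact ⟨(hr a).isCycleSystem hδ, isCyclicSystem_successorSystem δ _⟩
  · rw [Set.ncard_range_of_injective hinj, Nat.card_prod, Nat.card_eq_fintype_card (α := Bool),
      Fintype.card_bool]

end Cyclic

section PerfectMatching

variable {V J : Type*}

/-- A perfect matching of the complete graph on `J`, given as the permutation that exchanges the
two ends of each of its edges. -/
structure IsPerfectMatching (σ : Equiv.Perm J) : Prop where
  involutive : Function.Involutive σ
  ne_self : ∀ j, σ j ≠ j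

theorem IsPerfectMatching.permCongr {σ : Equiv.Perm V} (hσ : IsPerfectMatching σ) (e : V ≃ J) :
    IsPerfectMatching (e.permCongr σ) where
  involutive j := by simp [hσ.involutive (e.symm j)]
  ne_self j h := hσ.ne_self (e.symm j) (by simpa [← Equiv.eq_symm_apply] using h)

theorem IsPerfectMatching.sq_eq_one {σ : Equiv.Perm J} (hσ : IsPerfectMatching σ) : σ ^ 2 = 1 :=
  Equiv.ext fun j ↦ by simpa [sq] using hσ.involutive j

theorem IsPerfectMatching.card_support [Fintype J] [DecidableEq J] {σ : Equiv.Perm J}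
    (hσ : IsPerfectMatching σ) : σ.support.card = Fintype.card J := by
  rw [Finset.card_eq_iff_eq_univ]
  ext j
  simpa using hσ.ne_self j

theorem IsPerfectMatching.cycleType_eq [Fintype J] [DecidableEq J] {σ : Equiv.Perm J}
    (hσ : IsPerfectMatching σ) : σ.cycleType = Multiset.replicate (Fintype.card J / 2) 2 := by
  have hcycle := Equiv.Perm.cycleType_of_pow_prime_eq_one hσ.sq_eq_one
  have hcard := σ.sum_cycleType
  rw [hcycle, Multiset.sum_replicate, hσ.card_support, smul_eq_mul] at hcard
  rw [hcycle, ← hcard, Nat.mul_div_cancel _ two_pos]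

theorem IsPerfectMatching.even_card [Fintype J] {σ : Equiv.Perm J} (hσ : IsPerfectMatching σ) :
    Even (Fintype.card J) := by
  classical
  exact even_iff_two_dvd.2 (hσ.card_support ▸ Equiv.Perm.two_dvd_card_support hσ.sq_eq_one)

theorem IsPerfectMatching.exists_permCongr_eq [Fintype V] [Fintype J]
    (hcard : Fintype.card V = Fintype.card J) {σ : Equiv.Perm V} {τ : Equiv.Perm J}
    (hσ : IsPerfectMatching σ) (hτ : IsPerfectMatching τ) :
    ∃ e : V ≃ J, e.permCongr σ = τ := by
  classical
  let e := Fintype.equivOfCardEq hcard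
  have hconj : IsConj (e.permCongr σ) τ := by
    rw [Equiv.Perm.isConj_iff_cycleType_eq, (hσ.permCongr e).cycleType_eq, hτ.cycleType_eq]
  obtain ⟨c, hc⟩ := isConj_iff.1 hconj
  exact ⟨e.trans c, hc⟩

/-- The matching of `G ∪ {∞}` that joins `t` to `∞`, and two elements of `G` when their midpoint
is `t`. -/
def midpointMatching {G : Type*} [AddCommGroup G] [DecidableEq G] (t : G) :
    Option G → Option G
  | none => some t
  | some x => if x = t then none else some (t + t - x)

section Midpoint

variable {G : Type*} [AddCommGroup G] [DecidableEq G]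

theorem involutive_midpointMatching (t : G) : Function.Involutive (midpointMatching t) := by
  rintro (_ | x)
  · simp [midpointMatching]
  · by_cases hx : x = t
    · simp [midpointMatching, hx]
    · have : t + t - x ≠ t := by simpa [sub_eq_iff_eq_add] using Ne.symm hx
      simp [midpointMatching, hx, this]

theorem isPerfectMatching_midpointMatching (hG : Function.Injective fun x : G ↦ x + x) (t : G) :
    IsPerfectMatching (involutive_midpointMatching t).toPerm where
  involutive := involutive_midpointMatching t
  ne_self := by
    rintro (_ | x)
    · simp [midpointMatching]
    · by_cases hx : x = t
      · simp [midpointMatching, hx]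
      · simpa [midpointMatching, hx, sub_eq_iff_eq_add] using hG.ne (Ne.symm hx)

theorem midpointMatching_ne (hG : Function.Injective fun x : G ↦ x + x) {t u : G} (h : t ≠ u)
    (x : Option G) : midpointMatching t x ≠ midpointMatching u x := by
  obtain _ | x := x
  · simpa [midpointMatching] using h
  · by_cases hxt : x = t
    · subst hxt
      simp [midpointMatching, h]
    · by_cases hxu : x = u
      · subst hxu
        simp [midpointMatching, hxt]
      · simpa [midpointMatching, hxt, hxu] using hG.ne h

end Midpoint

theorem IsPerfectMatching.exists_oneFactorization [Fintype J] [Nonempty J] {τ : Equiv.Perm J}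
    (hτ : IsPerfectMatching τ) :
    ∃ p : Fin (Fintype.card J - 2) → Equiv.Perm J, (∀ t, IsPerfectMatching (p t)) ∧
      (∀ t j, p t j ≠ τ j) ∧ Pairwise fun t u ↦ ∀ j, p t j ≠ p u j := by
  obtain ⟨m, hm⟩ := hτ.even_card
  have hpos : 0 < Fintype.card J := Fintype.card_pos
  let G := ZMod (Fintype.card J - 1)
  have : NeZero (Fintype.card J - 1) := ⟨by omega⟩
  have hG : Function.Injective fun x : G ↦ x + x := by
    have hodd : Odd (Fintype.card J - 1) := ⟨m - 1, by omega⟩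
    intro x y hxy
    rw [← sub_eq_zero, ← ZMod.add_self_eq_zero_iff_eq_zero hodd, sub_add_sub_comm, sub_eq_zero]
    exact hxy
  have hcard : Fintype.card (Option G) = Fintype.card J := by
    rw [Fintype.card_option, ZMod.card]; omega
  obtain ⟨e, rfl⟩ :=
    (isPerfectMatching_midpointMatching hG 0).exists_permCongr_eq hcard hτ
  let u : Fin (Fintype.card J - 2) ≃ {t : G // t ≠ 0} := Fintype.equivOfCardEq <| by
    rw [Fintype.card_fin, Fintype.card_subtype_compl, Fintype.card_subtype_eq, ZMod.card]; omega
  refine ⟨fun t ↦ e.permCongr (involutive_midpointMatching (u t).1).toPerm,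
    fun t ↦ (isPerfectMatching_midpointMatching hG _).permCongr e, fun t j ↦ ?_,
    fun s t hst j ↦ ?_⟩
  · exact e.injective.ne (midpointMatching_ne hG (u t).2 _)
  · exact e.injective.ne (midpointMatching_ne hG (Subtype.coe_injective.ne (u.injective.ne hst)) _)

/-- The matching that joins `(q, 0)` to `(q, 1)`. -/
def flipMatching (Q : Type*) : Equiv.Perm (Q × Bool) :=
  Equiv.prodCongrRight fun _ ↦ Equiv.boolNot

theorem isPerfectMatching_flipMatching (Q : Type*) : IsPerfectMatching (flipMatching Q) where
  involutive := by rintro ⟨q, s⟩; simp [flipMatching]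
  ne_self j := by simp [flipMatching, Prod.ext_iff]

end PerfectMatching

/-- The difference `a j` or, when `shifted`, `a j + y`, taken with a minus sign when `negative`;
see `SignedIndex.value`. -/
structure SignedIndex (J : Type*) where
  index : J
  shifted : Bool
  negative : Bool

namespace SignedIndex

variable {J Q G : Type*} [AddCommGroup G]

instance : InvolutiveNeg (SignedIndex J) where
  neg d := ⟨d.index, d.shifted, !d.negative⟩
  neg_neg d := by simp only [Bool.not_not]

instance [Nonempty J] : Nonempty (SignedIndex J) :=
  ‹Nonempty J›.map fun j ↦ ⟨j, false, false⟩

theorem neg_mk (j : J) (u ε : Bool) : -(⟨j, u, ε⟩ : SignedIndex J) = ⟨j, u, !ε⟩ :=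
  rfl

/-- The difference labelled by a signed index. -/
def value (a : J → G) (y : G) : SignedIndex J → G
  | ⟨j, false, false⟩ => a j
  | ⟨j, true, false⟩ => a j + y
  | ⟨j, false, true⟩ => -a j
  | ⟨j, true, true⟩ => -(a j + y)

theorem value_neg (a : J → G) (y : G) (d : SignedIndex J) : value a y (-d) = -value a y d := by
  obtain ⟨j, _ | _, _ | _⟩ := d <;> simp [neg_mk, value]

theorem value_intCast {R : Type*} [AddCommGroupWithOne R] (a : J → ℤ) (y : ℤ)
    (d : SignedIndex J) :
    value (fun j ↦ (a j : R)) y d = (value a y d : ℤ) := by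
  obtain ⟨j, _ | _, _ | _⟩ := d <;> simp [value]

/-- The successor rule with difference cycles `a i, a j + y, -(a i + y), -a j` for the edges
`{i, j}` of the matching `p`. -/
def matchingRule (p : Equiv.Perm J) : SignedIndex J → SignedIndex J
  | ⟨j, u, ε⟩ => if u = ε then ⟨p j, !u, ε⟩ else ⟨p j, u, !ε⟩

/-- The successor rule with difference cycles
`a (q, 0), -(a (q, 0) + y), -a (q, 1), a (q, 1) + y`. -/
def quadRule : SignedIndex (Q × Bool) → SignedIndex (Q × Bool)
  | ⟨(q, s), u, ε⟩ => if s = ε then ⟨(q, s), !u, !ε⟩ else ⟨(q, !s), !u, ε⟩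

/-- The successor rule with difference cycles
`a (q, 0), -a (q, 1), a (ν q, 1) + y, -(a (ν q, 0) + y)`. -/
def linkRule (ν : Equiv.Perm Q) : SignedIndex (Q × Bool) → SignedIndex (Q × Bool)
  | ⟨(q, s), u, false⟩ => ⟨(q, !s), u, true⟩
  | ⟨(q, s), false, true⟩ => ⟨(ν q, s), true, false⟩
  | ⟨(q, s), true, true⟩ => ⟨(ν.symm q, s), false, false⟩

theorem isSuccessorRule_matchingRule (a : J → G) (y : G) {p : Equiv.Perm J}
    (hp : IsPerfectMatching p) : IsSuccessorRule (value a y) (matchingRule p) where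
  reverse := by
    rintro ⟨j, _ | _, _ | _⟩ <;> simp [matchingRule, neg_mk, hp.involutive j]
  iterate_four := by
    rintro ⟨j, _ | _, _ | _⟩ <;> simp [matchingRule, hp.involutive j]
  sum_eq_zero := by
    rintro ⟨j, _ | _, _ | _⟩ <;> simp only [matchingRule, hp.involutive j, value, reduceIte,
      Bool.not_true, Bool.not_false, reduceCtorEq] <;> abel
  ne_neg := by
    rintro ⟨j, _ | _, _ | _⟩ <;> simp [matchingRule, neg_mk, hp.ne_self j]

theorem isSuccessorRule_quadRule (a : Q × Bool → G) (y : G) :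
    IsSuccessorRule (value a y) quadRule where
  reverse := by rintro ⟨⟨q, _ | _⟩, _ | _, _ | _⟩ <;> rfl
  iterate_four := by rintro ⟨⟨q, _ | _⟩, _ | _, _ | _⟩ <;> rfl
  sum_eq_zero := by
    rintro ⟨⟨q, _ | _⟩, _ | _, _ | _⟩ <;> simp only [quadRule, value, reduceIte,
      Bool.not_true, Bool.not_false, reduceCtorEq] <;> abel
  ne_neg := by rintro ⟨⟨q, _ | _⟩, _ | _, _ | _⟩ <;> simp [quadRule, neg_mk]

theorem isSuccessorRule_linkRule {a : Q × Bool → G} {x : G} (y : G)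
    (ha : ∀ q, a (q, true) = a (q, false) + x) (ν : Equiv.Perm Q) :
    IsSuccessorRule (value a y) (linkRule ν) where
  reverse := by rintro ⟨⟨q, _ | _⟩, _ | _, _ | _⟩ <;> simp [linkRule, neg_mk]
  iterate_four := by rintro ⟨⟨q, _ | _⟩, _ | _, _ | _⟩ <;> simp [linkRule]
  sum_eq_zero := by
    rintro ⟨⟨q, _ | _⟩, _ | _, _ | _⟩ <;> simp only [linkRule, value, ha,
      Bool.not_true, Bool.not_false, Equiv.apply_symm_apply, Equiv.symm_apply_apply] <;> abel
  ne_neg := by rintro ⟨⟨q, _ | _⟩, _ | _, _ | _⟩ <;> simp [linkRule, neg_mk]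

theorem matchingRule_orthog_negConj (p : Equiv.Perm J) :
    SuccessorOrthog (matchingRule p) (negConj (matchingRule p)) := by
  rintro ⟨j, _ | _, _ | _⟩ <;> simp [matchingRule, negConj, neg_mk]

theorem quadRule_orthog_negConj :
    SuccessorOrthog (quadRule (Q := Q)) (negConj quadRule) := by
  rintro ⟨⟨q, _ | _⟩, _ | _, _ | _⟩ <;> simp [quadRule, negConj, neg_mk]

theorem linkRule_orthog_negConj (ν : Equiv.Perm Q) :
    SuccessorOrthog (linkRule ν) (negConj (linkRule ν)) := by
  rintro ⟨⟨q, _ | _⟩, _ | _, _ | _⟩ <;> simp [linkRule, negConj, neg_mk]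

theorem matchingRule_orthogPM_matchingRule {p p' : Equiv.Perm J} (h : ∀ j, p j ≠ p' j) :
    SuccessorOrthogPM (matchingRule p) (matchingRule p') := by
  constructor <;> rintro ⟨j, _ | _, _ | _⟩ <;>
    simp [matchingRule, negConj, neg_mk, h j]

theorem matchingRule_orthogPM_quadRule {p : Equiv.Perm (Q × Bool)}
    (h : ∀ j, p j ≠ flipMatching Q j) :
    SuccessorOrthogPM (matchingRule p) quadRule := by
  constructor <;> rintro ⟨⟨q, s⟩, u, ε⟩ <;>
    have hflip := h (q, s) <;>
    cases s <;> cases u <;> cases ε <;>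
    simp_all [matchingRule, quadRule, negConj, neg_mk, flipMatching]

theorem matchingRule_orthogPM_linkRule {p : Equiv.Perm (Q × Bool)} {ν : Equiv.Perm Q}
    (hp : Function.Involutive p) (h : ∀ j, p j ≠ flipMatching Q j) :
    SuccessorOrthogPM (matchingRule p) (linkRule ν) := by
  constructor <;> rintro ⟨⟨q, s⟩, u, ε⟩ <;>
    have hflip := h (q, s) <;>
    cases s <;> cases u <;> cases ε <;>
    simp_all [matchingRule, linkRule, negConj, neg_mk, hp (q, _), flipMatching]

theorem quadRule_orthogPM_linkRule {ν : Equiv.Perm Q} (hν : ∀ q, ν q ≠ q) :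
    SuccessorOrthogPM quadRule (linkRule ν) := by
  have hne : ∀ q, q ≠ ν q := fun q ↦ (hν q).symm
  have hne_symm : ∀ q, q ≠ ν.symm q := fun q h ↦ hν q (ν.eq_symm_apply.1 h)
  constructor <;> rintro ⟨⟨q, _ | _⟩, _ | _, _ | _⟩ <;>
    simp [quadRule, linkRule, negConj, neg_mk, hne, hne_symm]

end SignedIndex

section ResidueLabel

open SignedIndex

/-- The odd positive integers up to `4 * k - 1`, in pairs `4 * q + 1`, `4 * q + 3`. -/
def oddDifference (k : ℕ) (j : Fin k × Bool) : ℤ :=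
  4 * j.1 + bif j.2 then 3 else 1

theorem value_oddDifference_injective (k : ℕ) :
    Function.Injective (value (oddDifference k) 1) := by
  rintro ⟨⟨q, _ | _⟩, _ | _, _ | _⟩ ⟨⟨q', _ | _⟩, _ | _, _ | _⟩ h <;>
    simp only [value, oddDifference, cond_true, cond_false] at h <;>
    first | omega | (obtain rfl : q = q' := by omega); rfl

theorem value_oddDifference_bounds {k : ℕ} (d : SignedIndex (Fin k × Bool)) :
    value (oddDifference k) 1 d ≠ 0 ∧ |value (oddDifference k) 1 d| ≤ 4 * k := by
  obtain ⟨⟨q, _ | _⟩, _ | _, _ | _⟩ := d <;>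
    simp only [value, oddDifference, cond_true, cond_false, abs_le] <;> omega

theorem exists_value_oddDifference_eq_natCast {k m : ℕ} (h0 : m ≠ 0) (hm : m ≤ 4 * k) :
    ∃ d, value (oddDifference k) 1 d = m := by
  obtain ⟨q, r, rfl⟩ : ∃ (q : Fin k) (r : Fin 4), m = 4 * q + r + 1 :=
    ⟨⟨(m - 1) / 4, by omega⟩, ⟨(m - 1) % 4, by omega⟩, by simp only; omega⟩
  fin_cases r
  · exact ⟨⟨(q, false), false, false⟩, by simp [value, oddDifference]⟩
  · exact ⟨⟨(q, false), true, false⟩, by simp [value, oddDifference]⟩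
  · exact ⟨⟨(q, true), false, false⟩, by simp [value, oddDifference, add_assoc]⟩
  · exact ⟨⟨(q, true), true, false⟩, by simp [value, oddDifference]⟩

theorem exists_value_oddDifference_eq {k : ℕ} {z : ℤ} (h0 : z ≠ 0) (hz : z.natAbs ≤ 4 * k) :
    ∃ d, value (oddDifference k) 1 d = z := by
  obtain ⟨d, hd⟩ := exists_value_oddDifference_eq_natCast (Int.natAbs_ne_zero.2 h0) hz
  obtain h | h := z.natAbs_eq
  · exact ⟨d, hd.trans h.symm⟩
  · exact ⟨-d, by rw [value_neg, hd, ← h]⟩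

/-- The labelling of the nonzero residues modulo `8 * k + 1` by their absolutely least
representatives. -/
def residueLabel (k : ℕ) : SignedIndex (Fin k × Bool) → ZMod (8 * k + 1) :=
  value (fun j ↦ (oddDifference k j : ZMod (8 * k + 1))) 1

theorem valMinAbs_residueLabel {k : ℕ} (d : SignedIndex (Fin k × Bool)) :
    (residueLabel k d).valMinAbs = value (oddDifference k) 1 d := by
  have hd := abs_le.1 (value_oddDifference_bounds d).2
  refine (ZMod.valMinAbs_spec _ _).2 ⟨?_, by push_cast; omega, by push_cast; omega⟩
  rw [← value_intCast, Int.cast_one, residueLabel]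

theorem isDifferenceLabelling_residueLabel (k : ℕ) : IsDifferenceLabelling (residueLabel k) where
  map_neg := value_neg _ _
  injective d d' h := value_oddDifference_injective k <| by
    rw [← valMinAbs_residueLabel, h, valMinAbs_residueLabel]
  range_eq := by
    ext z
    rw [Set.mem_compl_singleton_iff]
    constructor
    · rintro ⟨d, rfl⟩
      rw [← (ZMod.valMinAbs_eq_zero _).ne, valMinAbs_residueLabel]
      exact (value_oddDifference_bounds d).1
    · intro hz
      have hle : z.valMinAbs.natAbs ≤ 4 * k := (ZMod.natAbs_valMinAbs_le z).trans (by omega)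
      obtain ⟨d, hd⟩ := exists_value_oddDifference_eq ((ZMod.valMinAbs_eq_zero z).not.2 hz) hle
      exact ⟨d, ZMod.injective_valMinAbs ((valMinAbs_residueLabel d).trans hd)⟩

variable {k : ℕ} {ι : Type*}

/-- The successor rules of one half of the systems; the other half are their negations. -/
def baseRule (p : ι → Equiv.Perm (Fin k × Bool)) :
    ι ⊕ Bool → SignedIndex (Fin k × Bool) → SignedIndex (Fin k × Bool)
  | .inl t => matchingRule (p t)
  | .inr false => quadRule
  | .inr true => linkRule (finRotate k)

theorem isSuccessorRule_baseRule {p : ι → Equiv.Perm (Fin k × Bool)}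
    (hp : ∀ t, IsPerfectMatching (p t)) :
    ∀ i, IsSuccessorRule (residueLabel k) (baseRule p i)
  | .inl t => isSuccessorRule_matchingRule _ _ (hp t)
  | .inr false => isSuccessorRule_quadRule _ _
  | .inr true => isSuccessorRule_linkRule (x := 2) _
      (fun q ↦ by push_cast [oddDifference, cond_true, cond_false]; ring) _

theorem baseRule_orthog_negConj (p : ι → Equiv.Perm (Fin k × Bool)) :
    ∀ i, SuccessorOrthog (baseRule p i) (negConj (baseRule p i))
  | .inl t => matchingRule_orthog_negConj (p t)
  | .inr false => quadRule_orthog_negConj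
  | .inr true => linkRule_orthog_negConj _

theorem finRotate_ne_self {m : ℕ} (hm : 2 ≤ m) (q : Fin m) : finRotate m q ≠ q :=
  Equiv.Perm.mem_support.1 (support_finRotate_of_le hm ▸ Finset.mem_univ q)

theorem pairwise_baseRule_orthogPM (hk : 2 ≤ k) {p : ι → Equiv.Perm (Fin k × Bool)}
    (hp : ∀ t, IsPerfectMatching (p t)) (hflip : ∀ t j, p t j ≠ flipMatching (Fin k) j)
    (hdisj : Pairwise fun t u ↦ ∀ j, p t j ≠ p u j) :
    Pairwise fun i j ↦ SuccessorOrthogPM (baseRule p i) (baseRule p j) := by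
  have hquad t : SuccessorOrthogPM (baseRule p (.inl t)) (baseRule p (.inr false)) :=
    matchingRule_orthogPM_quadRule (hflip t)
  have hlink t : SuccessorOrthogPM (baseRule p (.inl t)) (baseRule p (.inr true)) :=
    matchingRule_orthogPM_linkRule (hp t).involutive (hflip t)
  have hquad_link : SuccessorOrthogPM (baseRule p (.inr false)) (baseRule p (.inr true)) :=
    quadRule_orthogPM_linkRule (finRotate_ne_self hk)
  rintro (t | _ | _) (u | _ | _) h
  · exact matchingRule_orthogPM_matchingRule (hdisj fun htu ↦ h (congrArg _ htu))
  · exact hquad t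
  · exact hlink t
  · exact (hquad u).symm
  · exact absurd rfl h
  · exact hquad_link
  · exact (hlink u).symm
  · exact hquad_link.symm
  · exact absurd rfl h

end ResidueLabel

/-- If `n ≡ 1 (mod 8)` and `n ≥ 17`, then there exists a set of `(n-1)/2` mutually
orthogonal cyclic 4-cycle systems of `K_n`; in particular `μ'(4, n) ≥ (n-1)/2`. -/
theorem stmt_0 (n : ℕ) (hn : n % 8 = 1) (hn17 : 17 ≤ n) :
    ∃ S : Set (Set (Finset (Sym2 (ZMod n)))),
      (∀ F ∈ S, IsCycleSystem 4 F ∧ IsCyclicSystem F) ∧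
      S.Pairwise Orthog ∧
      S.ncard = (n - 1) / 2 := by
  obtain ⟨k, rfl⟩ : ∃ k, n = 8 * k + 1 := ⟨n / 8, by omega⟩
  have hk : 2 ≤ k := by omega
  have : NeZero k := ⟨by omega⟩
  obtain ⟨p, hp, hflip, hdisj⟩ :=
    (isPerfectMatching_flipMatching (Fin k)).exists_oneFactorization
  obtain ⟨S, hS, horthog, hcard⟩ := exists_mutuallyOrthogonal_of_successorRules
    (isDifferenceLabelling_residueLabel k) (isSuccessorRule_baseRule hp)
    (baseRule_orthog_negConj p) (pairwise_baseRule_orthogPM hk hp hflip hdisj)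
  refine ⟨S, hS, horthog, hcard.trans ?_⟩
  simp only [Nat.card_eq_fintype_card, Fintype.card_sum, Fintype.card_prod, Fintype.card_fin,
    Fintype.card_bool]
  omega
end

section
/- Let ℓ ≥ 4 be even, let n ≡ 1 (mod 2ℓ) and set N = (n−1)/(2ℓ). Then there exists a set of mutually orthogonal cyclic ℓ-cycle systems of K_n of cardinality at least N/(aℓ+b) − 1, where (a,b) = (4,−2) if ℓ ≡ 0 (mod 4) and (a,b) = (24,−18) if ℓ ≡ 2 (mod 4). In particular μ(ℓ,n) ≥ μ'(ℓ,n) ≥ N/(aℓ+b) − 1. -/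
/-! Split the differences `1, …, ℓN` of `ZMod (2ℓN + 1)` into `ℓ` blocks of length `N`. The base
cycle with parameters `(i, j)` takes from every block one difference, at an offset in `[0, N)` that
is affine in `(i, j)` modulo `N`: `j + i * t`, or the reflection `N - 1 - ·` of such a number, each
slope `t` being used once plainly and once reflected. For fixed `i` every difference is used once
as `j` runs through `ZMod N`, which gives a cyclic system; the reflected pairs make the offsets
cancel in the sum of the signed differences, so that the cycles close up. Two cycles from systems
`i ≠ i'` have at most one common offset for every two slopes, since `(i - i') * (t - t')` is not
divisible by `N`; so two common edges must lie in blocks of the same slope, and this is excluded by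
comparing the two paths between these edges. -/

open scoped fwdDiff

section CycleSystems

variable {V : Type*} [DecidableEq V] {ℓ : ℕ}

theorem mem_cycleEdges_iff_of_closed {u : ℕ → V} (hu : u ℓ = u 0) {e : Sym2 V} :
    e ∈ cycleEdges ℓ (fun k : Fin ℓ => u k) ↔ ∃ k < ℓ, s(u k, u (k + 1)) = e := by
  have hmod : ∀ k < ℓ, u ((k + 1) % ℓ) = u (k + 1) := by
    intro k hk
    rcases Nat.lt_or_ge (k + 1) ℓ with hlt | hge
    · rw [Nat.mod_eq_of_lt hlt]
    · rw [show k + 1 = ℓ by omega, Nat.mod_self, hu]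
  simp only [cycleEdges, Finset.mem_image, Finset.mem_univ, true_and]
  constructor
  · rintro ⟨k, rfl⟩
    exact ⟨k, k.isLt, by rw [hmod k k.isLt]⟩
  · rintro ⟨k, hk, rfl⟩
    exact ⟨⟨k, hk⟩, by rw [hmod k hk]⟩

theorem IsCycle.one_lt_card (hℓ : 3 ≤ ℓ) {E : Finset (Sym2 V)} (hE : IsCycle ℓ E) :
    1 < E.card := by
  obtain ⟨f, hf, rfl⟩ := hE
  have h01 : (0 + 1) % ℓ = 1 := Nat.mod_eq_of_lt (by omega)
  have h12 : (1 + 1) % ℓ = 2 := Nat.mod_eq_of_lt (by omega)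
  refine Finset.one_lt_card.2 ⟨s(f ⟨0, by omega⟩, f ⟨1, by omega⟩), ?_,
    s(f ⟨1, by omega⟩, f ⟨2, by omega⟩), ?_, ?_⟩
  · exact Finset.mem_image.2 ⟨⟨0, by omega⟩, Finset.mem_univ _, by simp only [h01]⟩
  · exact Finset.mem_image.2 ⟨⟨1, by omega⟩, Finset.mem_univ _, by simp only [h12]⟩
  · simp [hf.eq_iff]

theorem not_orthog_self (hℓ : 3 ≤ ℓ) {F : Set (Finset (Sym2 V))} (hF : ∀ E ∈ F, IsCycle ℓ E)
    (hne : F.Nonempty) : ¬ Orthog F F := by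
  obtain ⟨E, hE⟩ := hne
  intro horth
  have hcard := horth E hE E hE
  rw [Finset.inter_self] at hcard
  exact absurd ((hF E hE).one_lt_card hℓ) hcard.not_gt

theorem exists_pairwise_orthog_of_family (hℓ : 3 ≤ ℓ) {κ : Type*}
    {p : Set (Finset (Sym2 V)) → Prop} {F : κ → Set (Finset (Sym2 V))} (hp : ∀ i, p (F i))
    (hcycle : ∀ i, ∀ E ∈ F i, IsCycle ℓ E) (hne : ∀ i, (F i).Nonempty)
    (horth : ∀ i i', i ≠ i' → Orthog (F i) (F i')) :
    ∃ S : Set (Set (Finset (Sym2 V))),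
      (∀ G ∈ S, p G) ∧ S.Pairwise Orthog ∧ S.ncard = Nat.card κ := by
  have hinj : Function.Injective F := by
    intro i i' heq
    by_contra hii'
    have hself := horth i i' hii'
    rw [← heq] at hself
    exact not_orthog_self hℓ (hcycle i) (hne i) hself
  refine ⟨Set.range F, Set.forall_mem_range.2 hp, ?_, ?_⟩
  · rintro _ ⟨i, rfl⟩ _ ⟨i', rfl⟩ hne'
    exact horth i i' fun h => hne' (congrArg F h)
  · rw [← Set.image_univ, Set.ncard_image_of_injective _ hinj, Set.ncard_univ]

end CycleSystems

section DifferenceFamilies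

variable {n ℓ : ℕ} {ι ι' : Type*}

theorem edge_eq_edge {G : Type*} [AddCommGroup G] {a b a' b' : G}
    (hne : (b - a) + (b' - a') ≠ 0) (he : s(a, b) = s(a', b')) :
    a = a' ∧ b - a = b' - a' := by
  rcases Sym2.eq_iff.1 he with ⟨rfl, rfl⟩ | ⟨rfl, rfl⟩
  · exact ⟨rfl, rfl⟩
  · exact absurd (by abel) hne

/-- The set of all translates of the `ℓ`-cycles traced by the closed walks `w j`. -/
def development (ℓ : ℕ) (w : ι → ℕ → ZMod n) : Set (Finset (Sym2 (ZMod n))) :=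
  {E | ∃ j g, cycleEdges ℓ (fun k : Fin ℓ => w j k + g) = E}

/-- A family of closed walks of length `ℓ` with distinct vertices is a difference family when every
nonzero element of `ZMod n` is, in exactly one way and up to sign, the difference of two
consecutive vertices. -/
structure IsDifferenceFamily (ℓ : ℕ) (w : ι → ℕ → ZMod n) : Prop where
  closed : ∀ j, w j ℓ = w j 0
  injOn : ∀ j, Set.InjOn (w j) (Set.Iio ℓ)
  fwdDiff_inj : ∀ j j', ∀ k < ℓ, ∀ k' < ℓ, Δ_[1] (w j) k = Δ_[1] (w j') k' → j = j' ∧ k = k'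
  fwdDiff_add_ne_zero : ∀ j j', ∀ k < ℓ, ∀ k' < ℓ, Δ_[1] (w j) k + Δ_[1] (w j') k' ≠ 0
  exists_fwdDiff : ∀ d ≠ 0, ∃ j, ∃ k < ℓ, Δ_[1] (w j) k = d ∨ Δ_[1] (w j) k = -d

theorem isCyclicSystem_development (w : ι → ℕ → ZMod n) : IsCyclicSystem (development ℓ w) := by
  rintro _ ⟨j, g, rfl⟩ g'
  refine ⟨j, g + g', ?_⟩
  simp only [translateCycle, cycleEdges, Finset.image_image]
  congr 1
  funext k
  simp [add_assoc]

theorem translate_edge_eq {u v : ℕ → ZMod n} {k k' : ℕ} {g g' : ZMod n}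
    (hne : Δ_[1] u k + Δ_[1] v k' ≠ 0)
    (he : s(u k + g, u (k + 1) + g) = s(v k' + g', v (k' + 1) + g')) :
    u k + g = v k' + g' ∧ Δ_[1] u k = Δ_[1] v k' := by
  simp only [fwdDiff] at hne ⊢
  simpa only [add_sub_add_right_eq_sub] using edge_eq_edge (by simpa using hne) he

variable {w : ι → ℕ → ZMod n}

theorem mem_translate_iff {u : ℕ → ZMod n} (hu : u ℓ = u 0) {g : ZMod n} {e : Sym2 (ZMod n)} :
    e ∈ cycleEdges ℓ (fun k : Fin ℓ => u k + g) ↔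
      ∃ k < ℓ, s(u k + g, u (k + 1) + g) = e :=
  mem_cycleEdges_iff_of_closed (u := fun k => u k + g) (by rw [hu])

namespace IsDifferenceFamily

theorem isCycle (hw : IsDifferenceFamily ℓ w) : ∀ E ∈ development ℓ w, IsCycle ℓ E := by
  rintro _ ⟨j, g, rfl⟩
  exact ⟨_, fun k k' h => Fin.ext (hw.injOn j k.isLt k'.isLt (add_right_cancel h)), rfl⟩

theorem pairwise_disjoint (hw : IsDifferenceFamily ℓ w) :
    (development ℓ w).Pairwise (fun E E' => Disjoint E E') := by
  rintro _ ⟨j, g, rfl⟩ _ ⟨j', g', rfl⟩ hne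
  refine Finset.disjoint_left.2 fun e he he' => hne ?_
  obtain ⟨k, hk, rfl⟩ := (mem_translate_iff (hw.closed j)).1 he
  obtain ⟨k', hk', hee'⟩ := (mem_translate_iff (hw.closed j')).1 he'
  obtain ⟨hvertex, hdiff⟩ := translate_edge_eq (hw.fwdDiff_add_ne_zero _ _ _ hk _ hk') hee'.symm
  obtain ⟨rfl, rfl⟩ := hw.fwdDiff_inj _ _ _ hk _ hk' hdiff
  rw [add_left_cancel hvertex]

theorem not_isDiag_iff_exists_mem (hw : IsDifferenceFamily ℓ w) (e : Sym2 (ZMod n)) :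
    ¬ e.IsDiag ↔ ∃ E ∈ development ℓ w, e ∈ E := by
  constructor
  · induction e using Sym2.ind with
    | _ a b =>
      intro hab
      obtain ⟨j, k, hk, hd⟩ := hw.exists_fwdDiff (b - a) (sub_ne_zero.2 (Ne.symm hab))
      rcases hd with hd | hd <;> simp only [fwdDiff] at hd
      · refine ⟨_, ⟨j, a - w j k, rfl⟩, (mem_translate_iff (hw.closed j)).2 ⟨k, hk, ?_⟩⟩
        rw [show w j k + (a - w j k) = a by abel,
          show w j (k + 1) + (a - w j k) = b by linear_combination hd]
      · refine ⟨_, ⟨j, b - w j k, rfl⟩, (mem_translate_iff (hw.closed j)).2 ⟨k, hk, ?_⟩⟩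
        rw [show w j k + (b - w j k) = b by abel,
          show w j (k + 1) + (b - w j k) = a by linear_combination hd, Sym2.eq_swap]
  · rintro ⟨_, ⟨j, g, rfl⟩, he⟩
    obtain ⟨k, hk, rfl⟩ := (mem_translate_iff (hw.closed j)).1 he
    intro hdiag
    have heq : w j k = w j (k + 1) := add_right_cancel (Sym2.mk_isDiag_iff.1 hdiag)
    exact hw.fwdDiff_add_ne_zero j j k hk k hk (by simp [fwdDiff, heq])

theorem isCycleSystem (hw : IsDifferenceFamily ℓ w) : IsCycleSystem ℓ (development ℓ w) :=
  ⟨hw.isCycle, hw.pairwise_disjoint, hw.not_isDiag_iff_exists_mem⟩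

end IsDifferenceFamily

theorem orthog_development {w' : ι' → ℕ → ZMod n} (hw : ∀ j, w j ℓ = w j 0)
    (hw' : ∀ j, w' j ℓ = w' j 0)
    (hne : ∀ j j', ∀ k < ℓ, ∀ k' < ℓ, Δ_[1] (w j) k + Δ_[1] (w' j') k' ≠ 0)
    (hsep : ∀ j j', ∀ k < ℓ, ∀ l < ℓ, ∀ k' < ℓ, ∀ l' < ℓ,
      Δ_[1] (w j) k = Δ_[1] (w' j') k' → Δ_[1] (w j) l = Δ_[1] (w' j') l' →
      w j l - w j k = w' j' l' - w' j' k' → k = l) :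
    Orthog (development ℓ w) (development ℓ w') := by
  rintro _ ⟨j, g, rfl⟩ _ ⟨j', g', rfl⟩
  refine Finset.card_le_one.2 fun a ha b hb => ?_
  rw [Finset.mem_inter, mem_translate_iff (hw j), mem_translate_iff (hw' j')] at ha hb
  obtain ⟨⟨k, hk, rfl⟩, ⟨k', hk', hkk'⟩⟩ := ha
  obtain ⟨⟨l, hl, rfl⟩, ⟨l', hl', hll'⟩⟩ := hb
  obtain ⟨hvk, hdk⟩ := translate_edge_eq (hne _ _ _ hk _ hk') hkk'.symm
  obtain ⟨hvl, hdl⟩ := translate_edge_eq (hne _ _ _ hl _ hl') hll'.symm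
  rw [hsep j j' k hk l hl k' hk' l' hl' hdk hdl (by linear_combination hvl - hvk)]

end DifferenceFamilies

theorem intCast_zmod_injOn_Icc {n : ℕ} {a b : ℤ} (hab : b < a + n) :
    Set.InjOn (Int.cast : ℤ → ZMod n) (Set.Icc a b) := by
  rintro x ⟨hax, hxb⟩ y ⟨hay, hyb⟩ hxy
  have hdvd : (n : ℤ) ∣ y - x := (ZMod.intCast_eq_intCast_iff_dvd_sub _ _ _).1 hxy
  have hsub : y - x = 0 :=
    Int.eq_zero_of_abs_lt_dvd hdvd (abs_lt.2 ⟨by linarith, by linarith⟩)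
  linarith

theorem intCast_zmod_injOn_Icc_neg {ℓ N : ℕ} :
    Set.InjOn (Int.cast : ℤ → ZMod (2 * ℓ * N + 1)) (Set.Icc (-(ℓ * N)) (ℓ * N)) :=
  intCast_zmod_injOn_Icc (by push_cast; linarith)

theorem val_neg_one_sub_eq {N : ℕ} [NeZero N] (x : ZMod N) :
    ((-1 - x).val : ℤ) = N - 1 - x.val := by
  have hx := x.val_lt
  have hy := (-1 - x).val_lt
  have hdvd : (N : ℤ) ∣ (-1 - x).val + x.val + 1 := by
    rw [← ZMod.intCast_zmod_eq_zero_iff_dvd]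
    push_cast
    simp
  obtain ⟨c, hc⟩ := hdvd
  have hc1 : c = 1 := by nlinarith
  rw [hc1] at hc
  linarith

section AlternatingSums

theorem sum_range_two_mul_eq_of_pairs {M : Type*} [AddCommMonoid M] {f : ℕ → M} {c : M} {m : ℕ}
    (h : ∀ s < m, f (2 * s) + f (2 * s + 1) = c) : ∑ k ∈ Finset.range (2 * m), f k = m • c := by
  induction m with
  | zero => simp
  | succ m ih =>
    rw [Nat.mul_succ, Finset.sum_range_succ, Finset.sum_range_succ,
      ih fun s hs => h s (hs.trans m.lt_succ_self), add_assoc, h m m.lt_succ_self, succ_nsmul]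

variable {R : Type*} [CommRing R] [LinearOrder R] [IsStrictOrderedRing R]

theorem sum_neg_one_pow_mul_mem_Ioc (d : ℕ → R) {k : ℕ} (hk : 0 < k)
    (hpos : ∀ x < k, 0 < d x) (hd : StrictAntiOn d (Set.Iio k)) :
    ∑ x ∈ Finset.range k, (-1) ^ x * d x ∈ Set.Ioc 0 (d 0) := by
  induction k, hk using Nat.le_induction generalizing d with
  | base => simpa using hpos 0 zero_lt_one
  | succ k hk ih =>
    have htail := ih (fun x => d (x + 1)) (fun x hx => hpos _ (by omega))
      fun x hx y hy hxy => hd (Nat.succ_lt_succ hx) (Nat.succ_lt_succ hy) (Nat.succ_lt_succ hxy)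
    have hfirst : d (0 + 1) < d 0 := hd (Nat.succ_pos k) (Nat.succ_lt_succ hk) zero_lt_one
    rw [Finset.sum_range_succ']
    simp only [pow_succ, mul_neg_one, neg_mul, Finset.sum_neg_distrib, pow_zero, one_mul]
    constructor <;> linarith [htail.1, htail.2]

theorem injOn_sum_range_neg_one_pow_mul {d : ℕ → R} {M : ℕ}
    (hpos : ∀ x < M, 0 < d x) (hd : StrictAntiOn d (Set.Iio M)) :
    Set.InjOn (fun k => ∑ x ∈ Finset.range k, (-1) ^ x * d x) (Set.Iic M) := by
  intro k hk k' hk' heq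
  simp only [Set.mem_Iic] at hk hk'
  wlog hlt : k < k' generalizing k k'
  · rcases (not_lt.1 hlt).eq_or_lt with h | h
    · exact h.symm
    · exact (this heq.symm hk' hk h).symm
  have hsub : ∑ x ∈ Finset.Ico k k', (-1) ^ x * d x = 0 := by
    rw [Finset.sum_Ico_eq_sub _ hlt.le, sub_eq_zero]
    exact heq.symm
  simp only [Finset.sum_Ico_eq_sum_range, pow_add, mul_assoc, ← Finset.mul_sum] at hsub
  have htail := sum_neg_one_pow_mul_mem_Ioc (fun x => d (k + x)) (Nat.sub_pos_of_lt hlt)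
    (fun x hx => hpos _ (by omega)) fun x hx y hy hxy => by
      simp only [Set.mem_Iio] at hx hy
      exact hd (by simp only [Set.mem_Iio]; omega) (by simp only [Set.mem_Iio]; omega) (by omega)
  have hunit : ((-1 : R) ^ k) ≠ 0 := pow_ne_zero _ (neg_ne_zero.2 one_ne_zero)
  exact absurd ((mul_eq_zero.1 hsub).resolve_left hunit) htail.1.ne'

end AlternatingSums

/-- The combinatorial data from which base cycles of length `ℓ` are built. The `k`-th step of the
cycle goes in direction `sign k` by a length from the `label k`-th block; steps `k` and `partner k`
have the same direction and receive the same slope, one plainly and one reflected. In the closed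
cycles of `ZMod n` the signed lengths add up to `winding * n`. -/
structure CyclePattern (ℓ : ℕ) where
  sign : ℕ → ℤ
  label : ℕ → ℕ
  partner : ℕ → ℕ
  winding : ℤ
  sign_eq : ∀ k, sign k = 1 ∨ sign k = -1
  label_lt : ∀ k < ℓ, label k < ℓ
  label_injOn : Set.InjOn label (Set.Iio ℓ)
  partner_lt : ∀ k < ℓ, partner k < ℓ
  partner_partner : ∀ k < ℓ, partner (partner k) = k
  partner_ne : ∀ k < ℓ, partner k ≠ k
  sign_partner : ∀ k < ℓ, sign (partner k) = sign k
  sum_sign : ∑ k ∈ Finset.range ℓ, sign k = 2 * winding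
  sum_sign_mul_label : ∑ k ∈ Finset.range ℓ, sign k * label k = (2 * ℓ - 1) * winding

namespace CyclePattern

variable {ℓ : ℕ} (P : CyclePattern ℓ)

section Walks

variable {N : ℕ}

/-- The length of the `k`-th step: the element of the block `label k` with offset `r k`. -/
def stepLength (r : ℕ → ZMod N) (k : ℕ) : ℕ := P.label k * N + 1 + (r k).val

/-- The integer walk from `0` whose offsets inside the blocks are the residues `r`. -/
def walk (r : ℕ → ZMod N) (k : ℕ) : ℤ := ∑ x ∈ Finset.range k, P.sign x * P.stepLength r x

/-- The offsets at partner steps are reflections of each other in `[0, N)`. -/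
def IsReflected (r : ℕ → ZMod N) : Prop := ∀ k < ℓ, r (P.partner k) = -1 - r k

variable (r r' : ℕ → ZMod N)

@[simp]
theorem walk_zero : P.walk r 0 = 0 := rfl

theorem walk_succ (k : ℕ) : P.walk r (k + 1) = P.walk r k + P.sign k * P.stepLength r k :=
  Finset.sum_range_succ _ _

theorem stepLength_pos (k : ℕ) : 0 < P.stepLength r k := by
  unfold stepLength
  omega

theorem walk_sub_sub_walk_sub {k l : ℕ} (hkl : k ≤ l) :
    P.walk r l - P.walk r k - (P.walk r' l - P.walk r' k) =
      ∑ x ∈ Finset.Ico k l, P.sign x * ((r x).val - (r' x).val) := by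
  simp only [walk, ← Finset.sum_Ico_eq_sub _ hkl, ← Finset.sum_sub_distrib, stepLength]
  refine Finset.sum_congr rfl fun x _ => ?_
  push_cast
  ring

/-- The walk with offsets `r`, reduced modulo `n = 2ℓN + 1`. -/
def baseWalk (r : ℕ → ZMod N) (k : ℕ) : ZMod (2 * ℓ * N + 1) := P.walk r k

theorem fwdDiff_baseWalk (k : ℕ) :
    Δ_[1] (P.baseWalk r) k = ((P.sign k * P.stepLength r k : ℤ) : ZMod (2 * ℓ * N + 1)) := by
  simp [fwdDiff, baseWalk, walk_succ]

theorem natAbs_sign_mul_stepLength (k : ℕ) :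
    (P.sign k * P.stepLength r k).natAbs = P.stepLength r k := by
  rcases P.sign_eq k with h | h <;> simp [h]

variable [NeZero N]

theorem stepLength_le {k : ℕ} (hk : k < ℓ) : P.stepLength r k ≤ ℓ * N := by
  have hlabel := Nat.mul_le_mul_right N (P.label_lt k hk)
  have hr := (r k).val_lt
  rw [Nat.succ_mul] at hlabel
  unfold stepLength
  omega

theorem stepLength_lt_stepLength {k k' : ℕ} (h : P.label k < P.label k') :
    P.stepLength r k < P.stepLength r k' := by
  have hlabel := Nat.mul_le_mul_right N h
  have hr := (r k).val_lt
  rw [Nat.succ_mul] at hlabel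
  unfold stepLength
  omega

variable {r r'} in
theorem eq_of_stepLength_eq {k k' : ℕ} (hk : k < ℓ) (hk' : k' < ℓ)
    (h : P.stepLength r k = P.stepLength r' k') : k = k' ∧ r k = r' k' := by
  have hN := NeZero.pos N
  have hdigits : N * P.label k + (r k).val = N * P.label k' + (r' k').val := by
    simp only [stepLength, mul_comm _ N] at h
    omega
  constructor
  · apply P.label_injOn hk hk'
    simpa [Nat.mul_add_div hN, Nat.div_eq_of_lt (ZMod.val_lt _)] using congrArg (· / N) hdigits
  · apply ZMod.val_injective
    simpa [Nat.mod_eq_of_lt (ZMod.val_lt _)] using congrArg (· % N) hdigits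

theorem exists_label_eq {b : ℕ} (hb : b < ℓ) : ∃ k < ℓ, P.label k = b := by
  have hsurj := Finset.surjOn_of_injOn_of_card_le (s := Finset.range ℓ) (t := Finset.range ℓ)
    P.label (by simpa [Set.MapsTo] using P.label_lt) (by simpa using P.label_injOn) le_rfl
  simpa using hsurj (by simpa using hb)

theorem sign_mul_stepLength_mem_Icc {k : ℕ} (hk : k < ℓ) :
    P.sign k * P.stepLength r k ∈ Set.Icc (-(ℓ * N : ℤ)) (ℓ * N) := by
  rw [Set.mem_Icc, ← abs_le, Int.abs_eq_natAbs, natAbs_sign_mul_stepLength]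
  exact_mod_cast P.stepLength_le r hk

theorem sum_Ico_sign_mul_mem_Icc {k l : ℕ} (hl : l ≤ ℓ) :
    ∑ x ∈ Finset.Ico k l, P.sign x * ((r x).val - (r' x).val : ℤ) ∈
      Set.Icc (-(ℓ * N : ℤ)) (ℓ * N) := by
  have hterm : ∀ x, |P.sign x * ((r x).val - (r' x).val : ℤ)| ≤ N := by
    intro x
    have hr := (r x).val_lt
    have hr' := (r' x).val_lt
    rcases P.sign_eq x with h | h <;> rw [h, abs_le] <;> constructor <;> omega
  rw [Set.mem_Icc, ← abs_le]
  calc _ ≤ ∑ x ∈ Finset.Ico k l, |P.sign x * ((r x).val - (r' x).val : ℤ)| :=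
        Finset.abs_sum_le_sum_abs _ _
    _ ≤ (l - k : ℕ) * N := by
        simpa using Finset.sum_le_card_nsmul _ _ (N : ℤ) fun x (_ : x ∈ Finset.Ico k l) => hterm x
    _ ≤ ℓ * N := by
        gcongr
        omega

variable {r} in
theorem walk_eq_of_isReflected (hr : P.IsReflected r) :
    P.walk r ℓ = P.winding * (2 * ℓ * N + 1) := by
  have hreflect : ∑ k ∈ Finset.range ℓ, P.sign k * ((r k).val : ℤ) =
      ∑ k ∈ Finset.range ℓ, P.sign k * (N - 1 - (r k).val) := by
    refine Finset.sum_nbij' P.partner P.partner ?_ ?_ ?_ ?_ ?_ <;>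
      simp only [Finset.mem_range] <;> intro k hk
    · exact P.partner_lt k hk
    · exact P.partner_lt k hk
    · exact P.partner_partner k hk
    · exact P.partner_partner k hk
    · rw [P.sign_partner k hk, hr k hk, val_neg_one_sub_eq, sub_sub_cancel]
  have hsign := P.sum_sign
  have hlabel := P.sum_sign_mul_label
  simp only [walk, stepLength, Nat.cast_add, Nat.cast_mul, Nat.cast_one, mul_add, mul_one,
    ← mul_assoc, Finset.sum_add_distrib, ← Finset.sum_mul, mul_sub, Finset.sum_sub_distrib]
    at hreflect ⊢
  rw [hsign] at hreflect ⊢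
  rw [hlabel]
  linarith

variable {r r'}

theorem baseWalk_closed (hr : P.IsReflected r) : P.baseWalk r ℓ = P.baseWalk r 0 := by
  have hn : (2 * ℓ * N + 1 : ZMod (2 * ℓ * N + 1)) = 0 := by
    exact_mod_cast ZMod.natCast_self (2 * ℓ * N + 1)
  simp [baseWalk, P.walk_eq_of_isReflected hr, hn]

theorem fwdDiff_baseWalk_inj {k k' : ℕ} (hk : k < ℓ) (hk' : k' < ℓ)
    (h : Δ_[1] (P.baseWalk r) k = Δ_[1] (P.baseWalk r') k') : k = k' ∧ r k = r' k' := by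
  rw [fwdDiff_baseWalk, fwdDiff_baseWalk] at h
  have hstep := intCast_zmod_injOn_Icc_neg (P.sign_mul_stepLength_mem_Icc r hk)
    (P.sign_mul_stepLength_mem_Icc r' hk') h
  apply P.eq_of_stepLength_eq hk hk'
  simpa only [natAbs_sign_mul_stepLength] using congrArg Int.natAbs hstep

theorem fwdDiff_baseWalk_add_ne_zero {k k' : ℕ} (hk : k < ℓ) (hk' : k' < ℓ) :
    Δ_[1] (P.baseWalk r) k + Δ_[1] (P.baseWalk r') k' ≠ 0 := by
  intro h
  rw [fwdDiff_baseWalk, fwdDiff_baseWalk, add_eq_zero_iff_eq_neg, ← Int.cast_neg] at h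
  have hmem : -(P.sign k' * P.stepLength r' k') ∈ Set.Icc (-(ℓ * N : ℤ)) (ℓ * N) := by
    simpa [and_comm, neg_le] using P.sign_mul_stepLength_mem_Icc r' hk'
  have hstep := intCast_zmod_injOn_Icc_neg (P.sign_mul_stepLength_mem_Icc r hk) hmem h
  have hlength : P.stepLength r k = P.stepLength r' k' := by
    simpa only [Int.natAbs_neg, natAbs_sign_mul_stepLength] using congrArg Int.natAbs hstep
  obtain ⟨rfl, -⟩ := P.eq_of_stepLength_eq hk hk' hlength
  have hpos := P.stepLength_pos r' k
  rw [hlength] at hstep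
  rcases P.sign_eq k with hs | hs <;> rw [hs] at hstep <;> omega

end Walks

section Residues

variable {N : ℕ} (i : ℕ) (j : ZMod N)

/-- The offsets of the base cycle with parameters `i` and `j`: the slope at a pair of partners is
the smaller of the two positions. -/
def residue (i : ℕ) (j : ZMod N) (k : ℕ) : ZMod N :=
  if k < P.partner k then j + i * k else -1 - (j + i * P.partner k)

theorem isReflected_residue : P.IsReflected (P.residue i j) := by
  intro k hk
  rcases (P.partner_ne k hk).lt_or_gt with hlt | hgt
  · simp [residue, P.partner_partner k hk, hlt, hlt.not_gt]
  · simp [residue, P.partner_partner k hk, hgt, hgt.not_gt]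

theorem residue_bijective (k : ℕ) : Function.Bijective fun j : ZMod N => P.residue i j k := by
  unfold residue
  split_ifs
  · exact (Equiv.addRight (i * k : ZMod N)).bijective
  · exact ((Equiv.addRight (i * P.partner k : ZMod N)).trans (Equiv.subLeft (-1))).bijective

theorem exists_fwdDiff_baseWalk_residue {d : ZMod (2 * ℓ * N + 1)} (hd : d ≠ 0) :
    ∃ j : ZMod N, ∃ k < ℓ, Δ_[1] (P.baseWalk (P.residue i j)) k = d ∨
      Δ_[1] (P.baseWalk (P.residue i j)) k = -d := by
  set a := d.valMinAbs.natAbs with ha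
  have ha_pos : 0 < a := by simpa [ha, Nat.pos_iff_ne_zero] using hd
  have ha_le : a ≤ N * ℓ := by
    have hhalf := ZMod.natAbs_valMinAbs_le d
    have hmul : 2 * ℓ * N = 2 * (N * ℓ) := by ring
    omega
  have hd_eq : (a : ZMod (2 * ℓ * N + 1)) = d ∨ (a : ZMod (2 * ℓ * N + 1)) = -d := by
    rcases Int.natAbs_eq d.valMinAbs with h | h
    · left
      rw [← d.coe_valMinAbs, h, ← ha, Int.cast_natCast]
    · right
      rw [← d.coe_valMinAbs, h, ← ha, Int.cast_neg, Int.cast_natCast, neg_neg]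
  obtain ⟨k, hk, hlabel⟩ := P.exists_label_eq (Nat.div_lt_of_lt_mul (by omega : a - 1 < N * ℓ))
  obtain ⟨j, hj⟩ := (P.residue_bijective i k).2 ((a - 1 : ℕ) : ZMod N)
  have hlength : P.stepLength (P.residue i j) k = a := by
    simp only at hj
    have hdigits := Nat.div_add_mod' (a - 1) N
    rw [stepLength, hj, hlabel, ZMod.val_natCast]
    omega
  refine ⟨j, k, hk, ?_⟩
  rw [fwdDiff_baseWalk, hlength]
  rcases P.sign_eq k with hs | hs <;> rcases hd_eq with h | h <;> simp [hs, h]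

/-- All base walks of the pattern have distinct vertices. -/
def IsSimple (P : CyclePattern ℓ) : Prop :=
  ∀ (N : ℕ) [NeZero N] (r : ℕ → ZMod N), P.IsReflected r →
    Set.InjOn (P.baseWalk r) (Set.Iio ℓ)

variable {P} in
theorem IsSimple.isDifferenceFamily [NeZero N] (hP : P.IsSimple) :
    IsDifferenceFamily ℓ fun j : ZMod N => P.baseWalk (P.residue i j) where
  closed j := P.baseWalk_closed (P.isReflected_residue i j)
  injOn j := hP N _ (P.isReflected_residue i j)
  fwdDiff_inj j j' k hk k' hk' h := by
    obtain ⟨rfl, hres⟩ := P.fwdDiff_baseWalk_inj hk hk' h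
    exact ⟨(P.residue_bijective i k).1 hres, rfl⟩
  fwdDiff_add_ne_zero _ _ _ hk _ hk' := P.fwdDiff_baseWalk_add_ne_zero hk hk'
  exists_fwdDiff _ hd := P.exists_fwdDiff_baseWalk_residue i hd

end Residues

section Orthogonality

/-- The properties of the differences `δ k` between the offsets at step `k` of two cycles from
different systems: they change sign between partners and are distinct at distinct slopes. -/
structure IsDiscrepancy (δ : ℕ → ℤ) : Prop where
  partner : ∀ k < ℓ, δ (P.partner k) = -δ k
  injOn : Set.InjOn δ {k | k < ℓ ∧ k < P.partner k}

/-- No two common steps at partner positions of two cycles can be separated by paths of equal total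
displacement. -/
def IsSeparating : Prop :=
  ∀ δ, P.IsDiscrepancy δ → ∀ k < ℓ, k < P.partner k → δ k = 0 →
    ∑ x ∈ Finset.Ico k (P.partner k), P.sign x * δ x ≠ 0

variable {P} {δ : ℕ → ℤ}

theorem IsDiscrepancy.eq_or_eq_partner (hδ : P.IsDiscrepancy δ) {k k' : ℕ} (hk : k < ℓ)
    (hk' : k' < ℓ) (h : δ k = 0) (h' : δ k' = 0) : k' = k ∨ k' = P.partner k := by
  have hfirst : ∀ x < ℓ, δ x = 0 → ∃ y, (y = x ∨ y = P.partner x) ∧ δ y = 0 ∧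
      y ∈ {y | y < ℓ ∧ y < P.partner y} := by
    intro x hx hx0
    rcases (P.partner_ne x hx).lt_or_gt with hlt | hgt
    · exact ⟨_, Or.inr rfl, by rw [hδ.partner x hx, hx0, neg_zero], P.partner_lt x hx,
        by rwa [P.partner_partner x hx]⟩
    · exact ⟨x, Or.inl rfl, hx0, hx, hgt⟩
  obtain ⟨y, hy, hy0, hymem⟩ := hfirst k hk h
  obtain ⟨y', hy', hy0', hymem'⟩ := hfirst k' hk' h'
  obtain rfl : y = y' := hδ.injOn hymem hymem' (hy0.trans hy0'.symm)
  have hpk := P.partner_partner k hk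
  have hpk' := P.partner_partner k' hk'
  rcases hy with rfl | rfl <;> rcases hy' with h | h
  · exact Or.inl h.symm
  · right
    rw [h, hpk']
  · exact Or.inr h.symm
  · left
    rw [← hpk', ← h, hpk]

theorem IsDiscrepancy.sum_ne_zero_of_partner_eq_add_two (hδ : P.IsDiscrepancy δ) {k : ℕ}
    (hpartner : P.partner k = k + 2) (hk : k < ℓ) (h : δ k = 0) :
    ∑ x ∈ Finset.Ico k (P.partner k), P.sign x * δ x ≠ 0 := by
  have hlt := P.partner_lt k hk
  rw [hpartner] at hlt ⊢
  have hnext : δ (k + 1) ≠ 0 := fun h' => by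
    rcases hδ.eq_or_eq_partner hk (by omega) h h' with h | h <;> omega
  rw [Finset.sum_Ico_succ_top (by omega), Nat.Ico_succ_singleton, Finset.sum_singleton, h]
  rcases P.sign_eq (k + 1) with hs | hs <;> simpa [hs] using hnext

variable {N : ℕ} [NeZero N]

theorem isDiscrepancy_residue_sub {m i i' : ℕ} {j j' : ZMod N} (hm : m * ℓ ≤ N) (hi : i < m)
    (hi' : i' < m) (hne : i ≠ i') :
    P.IsDiscrepancy fun k => (P.residue i j k).val - (P.residue i' j' k).val where
  partner k hk := by
    rw [P.isReflected_residue i j k hk, P.isReflected_residue i' j' k hk, val_neg_one_sub_eq,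
      val_neg_one_sub_eq]
    ring
  injOn := by
    rintro x ⟨hx, hxp⟩ y ⟨hy, hyp⟩ hxy
    have hcast := congrArg (Int.cast : ℤ → ZMod N) hxy
    simp only [residue, hxp, hyp, if_true] at hcast
    push_cast [ZMod.natCast_zmod_val] at hcast
    have hdvd : (N : ℤ) ∣ (i - i') * (x - y) := by
      rw [← ZMod.intCast_zmod_eq_zero_iff_dvd]
      push_cast
      linear_combination hcast
    have hsmall : |((i : ℤ) - i') * (x - y)| < N := by
      have hm' : (m * ℓ : ℤ) ≤ N := by exact_mod_cast hm
      have hi_sub : |(i : ℤ) - i'| < m := abs_lt.2 ⟨by omega, by omega⟩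
      have hx_sub : |(x : ℤ) - y| < ℓ := abs_lt.2 ⟨by omega, by omega⟩
      rw [abs_mul]
      exact (mul_lt_mul'' hi_sub hx_sub (abs_nonneg _) (abs_nonneg _)).trans_le hm'
    rcases mul_eq_zero.1 (Int.eq_zero_of_abs_lt_dvd hdvd hsmall) with h | h <;> omega

theorem IsSeparating.eq_of_baseWalk_sub_eq (hP : P.IsSeparating) {r r' : ℕ → ZMod N}
    (hδ : P.IsDiscrepancy fun k => (r k).val - (r' k).val) {k l : ℕ} (hk : k < ℓ) (hl : l < ℓ)
    (hrk : r k = r' k) (hrl : r l = r' l)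
    (hsub : P.baseWalk r l - P.baseWalk r k = P.baseWalk r' l - P.baseWalk r' k) : k = l := by
  wlog hkl : k < l generalizing k l
  · rcases (not_lt.1 hkl).eq_or_lt with h | h
    · exact h.symm
    · exact (this hl hk hrl hrk (by linear_combination -hsub) h).symm
  have hpartner : l = P.partner k :=
    (hδ.eq_or_eq_partner hk hl (by simp [hrk]) (by simp [hrl])).resolve_left hkl.ne'
  subst hpartner
  refine absurd ?_ (hP _ hδ k hk hkl (by simp [hrk]))
  refine intCast_zmod_injOn_Icc_neg (P.sum_Ico_sign_mul_mem_Icc r r' hl.le)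
    ⟨by rw [neg_nonpos]; positivity, by positivity⟩ ?_
  rw [← walk_sub_sub_walk_sub _ _ _ hkl.le]
  push_cast
  exact sub_eq_zero.2 hsub

theorem exists_orthogonal_cyclic_systems (hℓ : 3 ≤ ℓ) (hP : P.IsSimple) (hsep : P.IsSeparating)
    {m : ℕ} (hm : m * ℓ ≤ N) :
    ∃ S : Set (Set (Finset (Sym2 (ZMod (2 * ℓ * N + 1))))),
      (∀ F ∈ S, IsCycleSystem ℓ F ∧ IsCyclicSystem F) ∧ S.Pairwise Orthog ∧ S.ncard = m := by
  have hfamily : ∀ i : Fin m, IsDifferenceFamily ℓ fun j : ZMod N => P.baseWalk (P.residue i j) :=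
    fun i => hP.isDifferenceFamily i
  rw [← Nat.card_fin m]
  refine exists_pairwise_orthog_of_family hℓ
    (fun i => ⟨(hfamily i).isCycleSystem, isCyclicSystem_development _⟩)
    (fun i => (hfamily i).isCycle) (fun i => ⟨_, 0, 0, rfl⟩) fun i i' hne => ?_
  refine orthog_development (hfamily i).closed (hfamily i').closed
    (fun _ _ _ hk _ hk' => P.fwdDiff_baseWalk_add_ne_zero hk hk') ?_
  intro j j' k hk l hl k' hk' l' hl' hdk hdl hsub
  obtain ⟨rfl, hrk⟩ := P.fwdDiff_baseWalk_inj hk hk' hdk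
  obtain ⟨rfl, hrl⟩ := P.fwdDiff_baseWalk_inj hl hl' hdl
  exact hsep.eq_of_baseWalk_sub_eq
    (isDiscrepancy_residue_sub hm i.isLt i'.isLt (Fin.val_ne_of_ne hne)) hk hl hrk hrl hsub

end Orthogonality

section Zigzag

variable {P : CyclePattern ℓ} {N M : ℕ} (r : ℕ → ZMod N)

theorem walk_eq_of_sign_eq (hsign : ∀ k < M, P.sign k = (-1) ^ k) {k : ℕ} (hk : k ≤ M) :
    P.walk r k = ∑ x ∈ Finset.range k, (-1) ^ x * (P.stepLength r x : ℤ) :=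
  Finset.sum_congr rfl fun x hx => by rw [hsign x ((Finset.mem_range.1 hx).trans_le hk)]

variable [NeZero N]

theorem strictAntiOn_stepLength (hlabel : StrictAntiOn P.label (Set.Iio M)) :
    StrictAntiOn (fun k => (P.stepLength r k : ℤ)) (Set.Iio M) :=
  fun _ hx _ hy hxy => Nat.cast_lt.2 (P.stepLength_lt_stepLength r (hlabel hx hy hxy))

theorem injOn_walk (hsign : ∀ k < M, P.sign k = (-1) ^ k)
    (hlabel : StrictAntiOn P.label (Set.Iio M)) : Set.InjOn (P.walk r) (Set.Iic M) :=
  (injOn_sum_range_neg_one_pow_mul (fun x _ => Nat.cast_pos.2 (P.stepLength_pos r x))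
    (strictAntiOn_stepLength r hlabel)).congr fun _ hk => (walk_eq_of_sign_eq r hsign hk).symm

theorem walk_mem_Icc (hℓ : 0 < ℓ) (hsign : ∀ k < M, P.sign k = (-1) ^ k)
    (hlabel : StrictAntiOn P.label (Set.Iio M)) {k : ℕ} (hk : k ≤ M) :
    P.walk r k ∈ Set.Icc 0 (ℓ * N : ℤ) := by
  rcases k.eq_zero_or_pos with rfl | hpos
  · rw [walk_zero]
    exact ⟨le_rfl, by positivity⟩
  · have hIoc := sum_neg_one_pow_mul_mem_Ioc _ hpos
      (fun x _ => Nat.cast_pos.2 (P.stepLength_pos r x))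
      ((strictAntiOn_stepLength r hlabel).mono (Set.Iio_subset_Iio hk))
    rw [walk_eq_of_sign_eq r hsign hk]
    exact ⟨hIoc.1.le, hIoc.2.trans (mod_cast P.stepLength_le r hℓ)⟩

end Zigzag

/-- The pattern of a cycle of length `4h + 4` which alternates in direction. One label is skipped
halfway along the zigzag and is used by the last step, which returns to the origin. -/
def zigzag (h : ℕ) : CyclePattern (4 * h + 4) where
  sign k := if Even k then 1 else -1
  label k :=
    if k < 2 * h + 2 then 4 * h + 3 - k
    else if k < 4 * h + 3 then 4 * h + 2 - k
    else 2 * h + 1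
  partner k := if k % 4 < 2 then k + 2 else k - 2
  winding := 0
  sign_eq := by grind
  label_lt k hk := by grind
  label_injOn := by
    intro k hk k' hk' heq
    simp only [Set.mem_Iio] at hk hk'
    grind
  partner_lt k hk := by grind
  partner_partner k _ := by grind
  partner_ne k _ := by grind
  sign_partner k _ := by grind
  sum_sign := by
    rw [show 4 * h + 4 = 2 * (2 * h + 2) by ring, sum_range_two_mul_eq_of_pairs (c := 0) (by grind),
      smul_zero, mul_zero]
  sum_sign_mul_label := by
    rw [show 4 * h + 4 = 2 * (2 * h + 1) + 1 + 1 by ring, Finset.sum_range_succ,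
      Finset.sum_range_succ, sum_range_two_mul_eq_of_pairs (c := 1) (by grind)]
    grind

theorem isSimple_zigzag (h : ℕ) : (zigzag h).IsSimple := by
  intro N _ r _
  have hsign : ∀ k < 4 * h + 3, (zigzag h).sign k = (-1) ^ k := fun _ _ =>
    neg_one_pow_eq_ite.symm
  have hlabel : StrictAntiOn (zigzag h).label (Set.Iio (4 * h + 3)) := by
    intro k hk k' hk' hkk'
    simp only [Set.mem_Iio] at hk hk'
    simp only [zigzag]
    grind
  exact (intCast_zmod_injOn_Icc (by push_cast; nlinarith)).comp
    ((injOn_walk r hsign hlabel).mono fun _ => Nat.le_of_lt_succ)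
    fun k hk => walk_mem_Icc r (Nat.succ_pos _) hsign hlabel (Nat.le_of_lt_succ hk)

theorem isSeparating_zigzag (h : ℕ) : (zigzag h).IsSeparating := by
  intro δ hδ k hk hlt h0
  refine hδ.sum_ne_zero_of_partner_eq_add_two ?_ hk h0
  simp only [zigzag] at hlt ⊢
  grind

/-- The pattern of a cycle of length `4h + 6` which alternates in direction except for the last
step, a second consecutive ascent that closes the cycle modulo `n`. Partners are two steps apart,
but for the pairs `{4h, 4h + 4}` and `{4h + 2, 4h + 5}` near the end. -/
def wrappedZigzag (h : ℕ) : CyclePattern (4 * h + 6) where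
  sign k := if Even k ∨ k = 4 * h + 5 then 1 else -1
  label k :=
    if k < 2 * h then 4 * h + 4 - k
    else if k < 4 * h + 4 then 4 * h + 3 - k
    else if k = 4 * h + 4 then 2 * h + 4
    else 4 * h + 5
  partner k :=
    if k = 4 * h then 4 * h + 4
    else if k = 4 * h + 4 then 4 * h
    else if k = 4 * h + 2 then 4 * h + 5
    else if k = 4 * h + 5 then 4 * h + 2
    else if k % 4 < 2 then k + 2
    else k - 2
  winding := 1
  sign_eq := by grind
  label_lt k hk := by grind
  label_injOn := by
    intro k hk k' hk' heq
    simp only [Set.mem_Iio] at hk hk'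
    grind
  partner_lt k hk := by grind
  partner_partner k hk := by
    split_ifs <;> omega
  partner_ne k _ := by grind
  sign_partner k hk := by grind
  sum_sign := by
    rw [show 4 * h + 6 = 2 * (2 * h + 2) + 1 + 1 by ring, Finset.sum_range_succ,
      Finset.sum_range_succ, sum_range_two_mul_eq_of_pairs (c := 0) (by grind)]
    grind
  sum_sign_mul_label := by
    rw [show 4 * h + 6 = 2 * (2 * h + 2) + 1 + 1 by ring, Finset.sum_range_succ,
      Finset.sum_range_succ, sum_range_two_mul_eq_of_pairs (c := 1) (by grind)]
    grind

theorem isSimple_wrappedZigzag (h : ℕ) : (wrappedZigzag h).IsSimple := by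
  intro N _ r hr
  have hsign : ∀ k < 4 * h + 4, (wrappedZigzag h).sign k = (-1) ^ k := by
    intro k hk
    rw [neg_one_pow_eq_ite]
    simp only [wrappedZigzag]
    grind
  have hlabel : StrictAntiOn (wrappedZigzag h).label (Set.Iio (4 * h + 4)) := by
    intro k hk k' hk' hkk'
    simp only [Set.mem_Iio] at hk hk'
    simp only [wrappedZigzag]
    grind
  have hinj := injOn_walk r hsign hlabel
  have hmem : ∀ k ≤ 4 * h + 4, (wrappedZigzag h).walk r k ∈ _ := fun k hk =>
    walk_mem_Icc r (Nat.succ_pos _) hsign hlabel hk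
  have hlast : (wrappedZigzag h).walk r (4 * h + 5) ∈ Set.Ioc ((4 * h + 6 : ℕ) * N : ℤ)
      (2 * (4 * h + 6 : ℕ) * N) := by
    have hclosed := (wrappedZigzag h).walk_eq_of_isReflected hr
    have hle := (wrappedZigzag h).stepLength_le r (k := 4 * h + 5) (by omega)
    have hpos := (wrappedZigzag h).stepLength_pos r (4 * h + 5)
    rw [walk_succ, show (wrappedZigzag h).sign (4 * h + 5) = 1 from if_pos (Or.inr rfl),
      show (wrappedZigzag h).winding = 1 from rfl] at hclosed
    zify at hle hpos
    constructor <;> push_cast at * <;> linarith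
  have hsplit : Set.Iio (4 * h + 6) = insert (4 * h + 5) (Set.Iic (4 * h + 4)) := by
    ext k
    simp only [Set.mem_Iio, Set.mem_insert_iff, Set.mem_Iic]
    omega
  rw [hsplit]
  refine (intCast_zmod_injOn_Icc (a := 0) (b := 2 * (4 * h + 6 : ℕ) * N)
    (by push_cast; linarith)).comp ?_ ?_
  · refine (Set.injOn_insert (by simp)).2 ⟨hinj, ?_⟩
    rintro ⟨k, hk, heq⟩
    exact ((hmem k hk).2.trans_lt hlast.1).ne heq
  · rintro k (rfl | hk)
    · exact ⟨(by positivity : (0 : ℤ) ≤ _).trans hlast.1.le, hlast.2⟩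
    · exact ⟨(hmem k hk).1, (hmem k hk).2.trans (by nlinarith)⟩

theorem wrappedZigzag_partner_four_mul (h : ℕ) :
    (wrappedZigzag h).partner (4 * h) = 4 * h + 4 := if_pos rfl

theorem wrappedZigzag_partner_four_mul_add_one (h : ℕ) :
    (wrappedZigzag h).partner (4 * h + 1) = 4 * h + 3 := by
  simp only [wrappedZigzag]
  split_ifs <;> omega

theorem wrappedZigzag_partner_four_mul_add_two (h : ℕ) :
    (wrappedZigzag h).partner (4 * h + 2) = 4 * h + 5 := by
  simp only [wrappedZigzag]
  split_ifs <;> omega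

theorem isSeparating_wrappedZigzag (h : ℕ) : (wrappedZigzag h).IsSeparating := by
  intro δ hδ k hk hlt h0
  have hsign : ∀ x, (wrappedZigzag h).sign x = if Even x ∨ x = 4 * h + 5 then 1 else -1 :=
    fun _ => rfl
  have hreflect_first := hδ.partner (4 * h) (by omega)
  have hreflect_second := hδ.partner (4 * h + 1) (by omega)
  rw [wrappedZigzag_partner_four_mul] at hreflect_first
  rw [wrappedZigzag_partner_four_mul_add_one] at hreflect_second
  by_cases hfirst : k = 4 * h
  · subst hfirst
    have hsum : ∑ x ∈ Finset.Ico (4 * h) (4 * h + 4), (wrappedZigzag h).sign x * δ x =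
        δ (4 * h + 2) := by
      simp [Finset.sum_Ico_eq_sum_range, Finset.sum_range_succ, hsign, parity_simps, h0,
        hreflect_second]
    rw [wrappedZigzag_partner_four_mul, hsum]
    intro hthird
    have hcommon := hδ.eq_or_eq_partner hk (by omega) h0 hthird
    rw [wrappedZigzag_partner_four_mul] at hcommon
    omega
  by_cases hthird : k = 4 * h + 2
  · subst hthird
    have hsum : ∑ x ∈ Finset.Ico (4 * h + 2) (4 * h + 5), (wrappedZigzag h).sign x * δ x =
        δ (4 * h + 1) - δ (4 * h) := by
      rw [Finset.sum_Ico_eq_sum_range, show 4 * h + 5 - (4 * h + 2) = 3 by omega]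
      simp [Finset.sum_range_succ, hsign, parity_simps, h0, hreflect_first, hreflect_second,
        sub_eq_add_neg]
    rw [wrappedZigzag_partner_four_mul_add_two, hsum, sub_ne_zero]
    intro heq
    have hslope := hδ.injOn ⟨by omega, by rw [wrappedZigzag_partner_four_mul_add_one]; omega⟩
      ⟨by omega, by rw [wrappedZigzag_partner_four_mul]; omega⟩ heq
    omega
  · refine hδ.sum_ne_zero_of_partner_eq_add_two ?_ hk h0
    simp only [wrappedZigzag] at hlt ⊢
    grind

theorem exists_isSimple_isSeparating {ℓ : ℕ} (hℓ : 4 ≤ ℓ) (heven : Even ℓ) :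
    ∃ P : CyclePattern ℓ, P.IsSimple ∧ P.IsSeparating := by
  obtain ⟨h, rfl | rfl⟩ : ∃ h, ℓ = 4 * h + 4 ∨ ℓ = 4 * h + 6 := ⟨(ℓ - 4) / 4, by grind⟩
  · exact ⟨zigzag h, isSimple_zigzag h, isSeparating_zigzag h⟩
  · exact ⟨wrappedZigzag h, isSimple_wrappedZigzag h, isSeparating_wrappedZigzag h⟩

end CyclePattern

theorem natCast_div_sub_one_le_natCast_div {N ℓ : ℕ} {c : ℝ} (hℓ : 0 < ℓ) (hc : ℓ ≤ c) :
    N / c - 1 ≤ (N / ℓ : ℕ) := by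
  have hℓ' : (0 : ℝ) < ℓ := Nat.cast_pos.2 hℓ
  calc (N : ℝ) / c - 1 ≤ N / ℓ - 1 :=
        sub_le_sub_right (div_le_div_of_nonneg_left N.cast_nonneg hℓ' hc) 1
    _ ≤ (N / ℓ : ℕ) := by
      rw [sub_le_iff_le_add, ← Nat.floor_div_eq_div (K := ℝ)]
      exact (Nat.lt_floor_add_one _).le

theorem stmt_1_general (ℓ N : ℕ) (hℓ : 4 ≤ ℓ) (heven : Even ℓ) :
    ∃ S : Set (Set (Finset (Sym2 (ZMod (2 * ℓ * N + 1))))),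
      (∀ F ∈ S, IsCycleSystem ℓ F ∧ IsCyclicSystem F) ∧ S.Pairwise Orthog ∧
      S.ncard = N / ℓ := by
  rcases N.eq_zero_or_pos with rfl | hN
  · exact ⟨∅, by simp, Set.pairwise_empty _, by simp⟩
  · have : NeZero N := ⟨hN.ne'⟩
    obtain ⟨P, hsimple, hsep⟩ := CyclePattern.exists_isSimple_isSeparating hℓ heven
    exact P.exists_orthogonal_cyclic_systems (by omega) hsimple hsep (Nat.div_mul_le_self N ℓ)

/-- Main theorem: if `ℓ ≥ 4` is even, `n ≡ 1 (mod 2ℓ)` and `N = (n-1)/(2ℓ)`, then there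
is a set of mutually orthogonal cyclic `ℓ`-cycle systems of `K_n` of cardinality at least
`N/(aℓ+b) - 1`, where `(a,b) = (4,-2)` if `ℓ ≡ 0 (mod 4)` and `(a,b) = (24,-18)` if
`ℓ ≡ 2 (mod 4)`; in particular `μ(ℓ,n) ≥ μ'(ℓ,n) ≥ N/(aℓ+b) - 1`. -/
theorem stmt_1 (ℓ n N : ℕ) (hℓ : 4 ≤ ℓ) (heven : ℓ % 2 = 0)
    (hn : n % (2 * ℓ) = 1) (hN : N = (n - 1) / (2 * ℓ)) :
    ∃ S : Set (Set (Finset (Sym2 (ZMod n)))),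
      (∀ F ∈ S, IsCycleSystem ℓ F ∧ IsCyclicSystem F) ∧
      S.Pairwise Orthog ∧
      (N : ℝ) / (if ℓ % 4 = 0 then 4 * (ℓ : ℝ) - 2 else 24 * (ℓ : ℝ) - 18) - 1 ≤ S.ncard := by
  obtain rfl : n = 2 * ℓ * N + 1 := by
    have hdvd : 2 * ℓ ∣ n - 1 := by simpa [hn] using Nat.dvd_sub_mod (n := 2 * ℓ) n
    have hn0 : n ≠ 0 := by
      rintro rfl
      simp at hn
    rw [hN, Nat.mul_div_cancel' hdvd, Nat.sub_add_cancel (Nat.one_le_iff_ne_zero.2 hn0)]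
  obtain ⟨S, hsystem, horth, hcard⟩ := stmt_1_general ℓ N hℓ (Nat.even_iff.2 heven)
  refine ⟨S, hsystem, horth, ?_⟩
  rw [hcard]
  have hℓ' : (4 : ℝ) ≤ ℓ := by exact_mod_cast hℓ
  exact natCast_div_sub_one_le_natCast_div (by omega) (by split_ifs <;> linarith)
end
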